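/- Let L be a ℤ-graded Lie conformal algebra of class 𝒱. Then deg p_{−1,1}(∂) + deg p_{0,1}(λ) ≠ 1. Furthermore: (1) if deg p_{−1,1}(∂) + deg p_{0,1}(λ) = 0, then L is isomorphic to one of Cur sl(2,ℂ), M(1), M(2); (2) if deg p_{−1,1}(∂) + deg p_{0,1}(λ) = 2, then L is isomorphic to one of ECL(s), SCL₂(0,s), CL₂(0,s), CL₃(s) for some s ∈ ℂ. -/

import Mathlib

open scoped BigOperators Classical ENNReal
open Polynomial

noncomputable section

/-- A Lie conformal algebra over `ℂ`, encoded via its `n`-th products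
`a_(n) b` and the operator `∂ = D`.  The `λ`-bracket is
`[a_λ b] = ∑ₙ (λⁿ/n!) • (a_(n) b)`. -/
structure LieConformalAlgebra (L : Type) [AddCommGroup L] [Module ℂ L] : Type where
  D : L →ₗ[ℂ] L
  prd : ℕ → L →ₗ[ℂ] L →ₗ[ℂ] L
  bound : ∀ a b : L, ∃ N : ℕ, ∀ n : ℕ, N ≤ n → prd n a b = 0
  sesq : ∀ (n : ℕ) (a b : L), prd n (D a) b = (-(n : ℂ)) • prd (n - 1) a b
  sesq' : ∀ (n : ℕ) (a b : L),
    prd n a (D b) = D (prd n a b) + (n : ℂ) • prd (n - 1) a b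
  skew : ∀ (n : ℕ) (a b : L),
    prd n a b
      = - ∑ᶠ j : ℕ, ((-1 : ℂ) ^ (n + j) * ((Nat.factorial j : ℂ))⁻¹) • (⇑D)^[j] (prd (n + j) b a)
  jacobi : ∀ (m n : ℕ) (a b c : L),
    prd m a (prd n b c) - prd n b (prd m a c)
      = ∑ j ∈ Finset.range (m + 1), (Nat.choose m j : ℂ) • prd (m + n - j) (prd j a b) c

namespace LieConformalAlgebra

variable {L : Type} [AddCommGroup L] [Module ℂ L]

/-- The action of a polynomial `q(∂) ∈ ℂ[∂]` on an element. -/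
def applyP (C : LieConformalAlgebra L) (q : Polynomial ℂ) (x : L) : L :=
  q.sum fun k c => c • (⇑C.D)^[k] x

/-- `[a_λ b] = p(∂, λ) • t`, where `p ∈ ℂ[∂][λ]` is a two-variable polynomial
(outer variable `λ`, inner variable `∂`). -/
def BracketEq (C : LieConformalAlgebra L) (a b t : L) (p : Polynomial (Polynomial ℂ)) : Prop :=
  ∀ n : ℕ, C.prd n a b = (Nat.factorial n : ℂ) • C.applyP (p.coeff n) t

def IsSubalgebra (C : LieConformalAlgebra L) (N : Submodule ℂ L) : Prop :=
  (∀ x ∈ N, C.D x ∈ N) ∧ ∀ n : ℕ, ∀ a ∈ N, ∀ b ∈ N, C.prd n a b ∈ N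

def IsIdeal (C : LieConformalAlgebra L) (N : Submodule ℂ L) : Prop :=
  (∀ x ∈ N, C.D x ∈ N) ∧ ∀ (n : ℕ) (a : L), ∀ b ∈ N, C.prd n a b ∈ N

/-- `L` is finitely generated as a Lie conformal algebra (finite type). -/
def FiniteType (C : LieConformalAlgebra L) : Prop :=
  ∃ s : Finset L, ∀ N : Submodule ℂ L, C.IsSubalgebra N → (s : Set L) ⊆ (N : Set L) → N = ⊤

/-- `L` is finitely generated as a `ℂ[∂]`-module. -/
def FGPolyModule (C : LieConformalAlgebra L) : Prop :=
  ∃ s : Finset L, ∀ N : Submodule ℂ L, (∀ x ∈ N, C.D x ∈ N) → (s : Set L) ⊆ (N : Set L) → N = ⊤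

/-- Iterated adjoint action `a₁_(k₁)(a₂_(k₂)(⋯ x))`. -/
def iterPrd (C : LieConformalAlgebra L) : List (L × ℕ) → L → L
  | [], x => x
  | (a, k) :: t, x => C.prd k a (iterPrd C t x)

/-- The `ℂ[∂]`-rank of the submodule `N` is at most `r`:
any `r+1` elements of `N` are `ℂ[∂]`-linearly dependent. -/
def polyRankLE (C : LieConformalAlgebra L) (N : Submodule ℂ L) (r : ℕ) : Prop :=
  ∀ v : Fin (r + 1) → L, (∀ k, v k ∈ N) →
    ∃ q : Fin (r + 1) → Polynomial ℂ, (∃ k, q k ≠ 0) ∧ ∑ k, C.applyP (q k) (v k) = 0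

/-- The family `v` is a free `ℂ[∂]`-basis of `L`. -/
def IsFreePolyBasis (C : LieConformalAlgebra L) {ι : Type} (v : ι → L) : Prop :=
  LinearIndependent ℂ (fun q : ι × ℕ => (⇑C.D)^[q.2] (v q.1)) ∧
  Submodule.span ℂ (Set.range fun q : ι × ℕ => (⇑C.D)^[q.2] (v q.1)) = ⊤

/-- `[U_λ V]`: the `ℂ`-span of all `u_(n) v`. -/
def bspan (C : LieConformalAlgebra L) (U V : Set L) : Submodule ℂ L :=
  Submodule.span ℂ {x : L | ∃ (n : ℕ) (u : L) (w : L), u ∈ U ∧ w ∈ V ∧ x = C.prd n u w}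

end LieConformalAlgebra

/-- `∂` as an element of `ℂ[∂][λ]`. -/
def Pd : Polynomial (Polynomial ℂ) := Polynomial.C Polynomial.X
/-- `λ` as an element of `ℂ[∂][λ]`. -/
def Pl : Polynomial (Polynomial ℂ) := Polynomial.X
/-- a constant in `ℂ[∂][λ]`. -/
def Pc (a : ℂ) : Polynomial (Polynomial ℂ) := Polynomial.C (Polynomial.C a)

/-- Total degree of a two-variable polynomial in `ℂ[∂][λ]`. -/
def tdeg (p : Polynomial (Polynomial ℂ)) : ℕ :=
  p.support.sup fun n => n + (p.coeff n).natDegree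

section ModelPolynomials

/-- structure polynomials of `𝒱(s)` -/
def pV (s : ℂ) (i j : ℤ) : Polynomial (Polynomial ℂ) :=
  Pd + Pc 2 * Pl + Pc (s * ((i : ℂ) - (j : ℂ)))

/-- structure polynomials of `CL₁(s)` -/
def pCL1 (s : ℂ) (i j : ℤ) : Polynomial (Polynomial ℂ) :=
  Pc ((i : ℂ) + 1) * Pd + Pc ((i : ℂ) + (j : ℂ) + 2) * Pl + Pc (s * ((i : ℂ) - (j : ℂ)))

/-- structure polynomials of `CL₂(b,s)` -/
def pCL2 (b s : ℂ) (i j : ℤ) : Polynomial (Polynomial ℂ) :=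
  Pc ((i : ℂ) + b) * Pd + Pc ((i : ℂ) + (j : ℂ) + 2 * b) * Pl + Pc (s * ((i : ℂ) - (j : ℂ)))

/-- structure polynomials of `SCL₂(b,s)` (for `2b ∈ ℤ`), w.r.t. the basis
`L'ᵢ = Lᵢ (i ≠ -2b)`, `L'_{-2b} = (∂+2s)L_{-2b}` of the corresponding graded
subalgebra of `CL₂(b,s)`. -/
def pSCL2 (b s : ℂ) (i j : ℤ) : Polynomial (Polynomial ℂ) :=
  (if (i : ℂ) = -(2 * b) then Pc (2 * s) - Pl else 1) *
  (if (j : ℂ) = -(2 * b) then Pd + Pl + Pc (2 * s) else 1) *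
  (if (i : ℂ) + (j : ℂ) = -(2 * b) then Pc ((i : ℂ) + b) else pCL2 b s i j)

/-- structure polynomials of `CL₃(s)` -/
def pCL3 (s : ℂ) (i j : ℤ) : Polynomial (Polynomial ℂ) :=
  if i + j = 0 then Pc (i : ℂ) * (Pd + Pc s)
  else if i = 0 then Pc (-(j : ℂ)) * (Pc (2 * s) - Pl)
  else if j = 0 then Pc (i : ℂ) * (Pd + Pl + Pc (2 * s))
  else Pc (i : ℂ) * Pd + Pc ((i : ℂ) + (j : ℂ)) * Pl + Pc (s * ((i : ℂ) - (j : ℂ)))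

/-- structure polynomials of `ECL(s)` -/
def pECL (s : ℂ) (i j : ℤ) : Polynomial (Polynomial ℂ) :=
  if i + j = 0 then Pc (i : ℂ) * (Pd + Pc s) * (Pd + Pc (2 * s))
  else if i = 0 then Pc (-(j : ℂ))
  else if j = 0 then Pc (i : ℂ)
  else Pc (i : ℂ) * Pd + Pc ((i : ℂ) + (j : ℂ)) * Pl + Pc (s * ((i : ℂ) - (j : ℂ)))

/-- structure polynomials of `M(1)` (indices `≥ -1`, completed by skew-symmetry) -/
def pM1 (i j : ℤ) : Polynomial (Polynomial ℂ) :=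
  if i = 1 ∧ j = 1 then Pd + Pc 2 * Pl
  else if i = -1 ∧ 1 ≤ j then Pc (((j : ℂ) + 1) * ((j : ℂ) - 2) / 2)
  else if j = -1 ∧ 1 ≤ i then Pc (-(((i : ℂ) + 1) * ((i : ℂ) - 2) / 2))
  else if i = 0 then Pc (-(j : ℂ))
  else if j = 0 then Pc (i : ℂ)
  else if i = 1 ∧ 2 ≤ j then 1
  else if j = 1 ∧ 2 ≤ i then -1
  else 0

/-- structure polynomials of `M(2)` (completed by skew-symmetry) -/
def pM2 (i j : ℤ) : Polynomial (Polynomial ℂ) :=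
  if i = 1 ∧ j = 1 then Pd + Pc 2 * Pl
  else if i = -1 ∧ j = -1 then Pd + Pc 2 * Pl
  else if i = 0 then Pc (-(j : ℂ))
  else if j = 0 then Pc (i : ℂ)
  else if i = -1 ∧ 1 ≤ j then Pc (((j : ℂ) + 1) * ((j : ℂ) - 2) / 2)
  else if j = -1 ∧ 1 ≤ i then Pc (-(((i : ℂ) + 1) * ((i : ℂ) - 2) / 2))
  else if i = 1 ∧ j ≤ -2 then Pc (((j : ℂ) - 1) * ((j : ℂ) + 2) / 2)
  else if j = 1 ∧ i ≤ -2 then Pc (-(((i : ℂ) - 1) * ((i : ℂ) + 2) / 2))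
  else if i = -1 ∧ j ≤ -2 then 1
  else if j = -1 ∧ i ≤ -2 then -1
  else if i = 1 ∧ 2 ≤ j then 1
  else if j = 1 ∧ 2 ≤ i then -1
  else 0

end ModelPolynomials

namespace LieConformalAlgebra

variable {L : Type} [AddCommGroup L] [Module ℂ L]

/-- `C` is isomorphic to the Virasoro Lie conformal algebra. -/
def IsVir (C : LieConformalAlgebra L) : Prop :=
  ∃ e : L, C.IsFreePolyBasis (fun _ : Unit => e) ∧ C.BracketEq e e e (Pd + Pc 2 * Pl)

/-- `C` is isomorphic to the loop Virasoro Lie conformal algebra `𝒱(s)`. -/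
def IsV (C : LieConformalAlgebra L) (s : ℂ) : Prop :=
  ∃ v : ℤ → L, C.IsFreePolyBasis v ∧
    ∀ i j : ℤ, C.BracketEq (v i) (v j) (v (i + j)) (pV s i j)

/-- `C` is isomorphic to `CL₁(s)`. -/
def IsCL1 (C : LieConformalAlgebra L) (s : ℂ) : Prop :=
  ∃ v : ℤ → L, C.IsFreePolyBasis (fun q : {i : ℤ // -1 ≤ i} => v q.1) ∧
    ∀ i j : ℤ, -1 ≤ i → -1 ≤ j →
      C.BracketEq (v i) (v j) (if -1 ≤ i + j then v (i + j) else 0) (pCL1 s i j)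

/-- `C` is isomorphic to `CL₂(b,s)`. -/
def IsCL2 (C : LieConformalAlgebra L) (b s : ℂ) : Prop :=
  ∃ v : ℤ → L, C.IsFreePolyBasis v ∧
    ∀ i j : ℤ, C.BracketEq (v i) (v j) (v (i + j)) (pCL2 b s i j)

/-- `C` is isomorphic to `SCL₂(b,s)`. -/
def IsSCL2 (C : LieConformalAlgebra L) (b s : ℂ) : Prop :=
  ∃ v : ℤ → L, C.IsFreePolyBasis v ∧
    ∀ i j : ℤ, C.BracketEq (v i) (v j) (v (i + j)) (pSCL2 b s i j)

/-- `C` is isomorphic to `CL₃(s)`. -/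
def IsCL3 (C : LieConformalAlgebra L) (s : ℂ) : Prop :=
  ∃ v : ℤ → L, C.IsFreePolyBasis v ∧
    ∀ i j : ℤ, C.BracketEq (v i) (v j) (v (i + j)) (pCL3 s i j)

/-- `C` is isomorphic to `ECL(s)`. -/
def IsECL (C : LieConformalAlgebra L) (s : ℂ) : Prop :=
  ∃ v : ℤ → L, C.IsFreePolyBasis v ∧
    ∀ i j : ℤ, C.BracketEq (v i) (v j) (v (i + j)) (pECL s i j)

/-- `C` is isomorphic to `M(1)`. -/
def IsM1 (C : LieConformalAlgebra L) : Prop :=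
  ∃ v : ℤ → L, C.IsFreePolyBasis (fun q : {i : ℤ // -1 ≤ i} => v q.1) ∧
    ∀ i j : ℤ, -1 ≤ i → -1 ≤ j →
      C.BracketEq (v i) (v j) (if -1 ≤ i + j then v (i + j) else 0) (pM1 i j)

/-- `C` is isomorphic to `M(2)`. -/
def IsM2 (C : LieConformalAlgebra L) : Prop :=
  ∃ v : ℤ → L, C.IsFreePolyBasis v ∧
    ∀ i j : ℤ, C.BracketEq (v i) (v j) (v (i + j)) (pM2 i j)

/-- `C` is isomorphic to the current Lie conformal algebra `Cur 𝔤`. -/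
def IsCur (C : LieConformalAlgebra L) (g : Type) [LieRing g] [LieAlgebra ℂ g] : Prop :=
  ∃ φ : g →ₗ[ℂ] L,
    Function.Bijective (fun f : ℕ →₀ g => f.sum fun k x => (⇑C.D)^[k] (φ x)) ∧
    (∀ x y : g, C.prd 0 (φ x) (φ y) = φ ⁅x, y⁆) ∧
    ∀ n : ℕ, 1 ≤ n → ∀ x y : g, C.prd n (φ x) (φ y) = 0

/-- `C ≅ Cur sl(2,ℂ)`. -/
def IsCurSl2 (C : LieConformalAlgebra L) : Prop :=
  C.IsCur ↥(LieAlgebra.SpecialLinear.sl (Fin 2) ℂ)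

/-- `C ≅ Cur 𝒲`, `𝒲` the Witt algebra (basis `wᵢ`, `[wᵢ,wⱼ] = (j-i)w_{i+j}`). -/
def IsCurWitt (C : LieConformalAlgebra L) : Prop :=
  ∃ v : ℤ → L, C.IsFreePolyBasis v ∧
    (∀ i j : ℤ, C.prd 0 (v i) (v j) = (((j : ℂ) - (i : ℂ))) • v (i + j)) ∧
    ∀ n : ℕ, 1 ≤ n → ∀ i j : ℤ, C.prd n (v i) (v j) = 0

/-- `C ≅ Cur 𝒲₁`, `𝒲₁` spanned by the `wᵢ`, `i ≥ -1`. -/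
def IsCurWitt1 (C : LieConformalAlgebra L) : Prop :=
  ∃ v : ℤ → L, C.IsFreePolyBasis (fun q : {i : ℤ // -1 ≤ i} => v q.1) ∧
    (∀ i j : ℤ, -1 ≤ i → -1 ≤ j →
      C.prd 0 (v i) (v j) = (((j : ℂ) - (i : ℂ))) • (if -1 ≤ i + j then v (i + j) else 0)) ∧
    ∀ n : ℕ, 1 ≤ n → ∀ i j : ℤ, -1 ≤ i → -1 ≤ j → C.prd n (v i) (v j) = 0

end LieConformalAlgebra

/-- A `ℤ`-graded Lie conformal algebra. -/
structure GradedLCA (L : Type) [AddCommGroup L] [Module ℂ L]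
    extends LieConformalAlgebra L where
  G : ℤ → Submodule ℂ L
  internal : DirectSum.IsInternal G
  dGrade : ∀ i : ℤ, ∀ x ∈ G i, D x ∈ G i
  prdGrade : ∀ (i j : ℤ) (n : ℕ), ∀ a ∈ G i, ∀ b ∈ G j, prd n a b ∈ G (i + j)

namespace GradedLCA

variable {L : Type} [AddCommGroup L] [Module ℂ L]

/-- A graded ideal: an ideal generated by homogeneous elements. -/
def IsGradedIdeal (C : GradedLCA L) (N : Submodule ℂ L) : Prop :=
  C.toLieConformalAlgebra.IsIdeal N ∧ (⨆ i : ℤ, N ⊓ C.G i) = N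

/-- `L` is simple graded: nonzero bracket, and the only graded ideals are `⊥` and `⊤`. -/
def IsSimpleGraded (C : GradedLCA L) : Prop :=
  (∃ (n : ℕ) (a b : L), C.prd n a b ≠ 0) ∧
  ∀ N : Submodule ℂ L, C.IsGradedIdeal N → N = ⊥ ∨ N = ⊤

/-- `[L_λ L] = L`. -/
def Perfect (C : GradedLCA L) : Prop :=
  Submodule.span ℂ {x : L | ∃ (n : ℕ) (a b : L), x = C.prd n a b} = ⊤

/-- Each component `L_i` is a nilpotent `L₀`-module under the adjoint action. -/
def Rootless (C : GradedLCA L) : Prop :=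
  ∀ i : ℤ, ∃ n : ℕ, 1 ≤ n ∧ ∀ l : List (L × ℕ), l.length = n →
    (∀ q ∈ l, q.1 ∈ C.G 0) → ∀ x ∈ C.G i, C.toLieConformalAlgebra.iterPrd l x = 0

/-- The ranks of the components are uniformly bounded. -/
def UniformlyBounded (C : GradedLCA L) : Prop :=
  ∃ N : ℕ, 1 ≤ N ∧ ∀ i : ℤ, C.toLieConformalAlgebra.polyRankLE (C.G i) N

end GradedLCA

/-- A module over a Lie conformal algebra, encoded via the `n`-th actions. -/
structure LCAModule {L : Type} [AddCommGroup L] [Module ℂ L] (C : LieConformalAlgebra L)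
    (M : Type) [AddCommGroup M] [Module ℂ M] : Type where
  DM : M →ₗ[ℂ] M
  act : ℕ → L →ₗ[ℂ] M →ₗ[ℂ] M
  bound : ∀ (a : L) (m : M), ∃ N : ℕ, ∀ n : ℕ, N ≤ n → act n a m = 0
  sesq : ∀ (n : ℕ) (a : L) (m : M), act n (C.D a) m = (-(n : ℂ)) • act (n - 1) a m
  sesq' : ∀ (n : ℕ) (a : L) (m : M),
    act n a (DM m) = DM (act n a m) + (n : ℂ) • act (n - 1) a m
  comm : ∀ (p q : ℕ) (a b : L) (m : M),
    act p a (act q b m) - act q b (act p a m)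
      = ∑ j ∈ Finset.range (p + 1), (Nat.choose p j : ℂ) • act (p + q - j) (C.prd j a b) m

namespace LCAModule

variable {L : Type} [AddCommGroup L] [Module ℂ L] {C : LieConformalAlgebra L}
variable {M : Type} [AddCommGroup M] [Module ℂ M]

/-- Iterated action `a₁_(k₁)(a₂_(k₂)(⋯ m))`. -/
def iterAct (ρ : LCAModule C M) : List (L × ℕ) → M → M
  | [], m => m
  | (a, k) :: t, m => ρ.act k a (iterAct ρ t m)

/-- `N` is an `L`-submodule of `M`. -/
def IsSub (ρ : LCAModule C M) (N : Submodule ℂ M) : Prop :=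
  (∀ m ∈ N, ρ.DM m ∈ N) ∧ ∀ (n : ℕ) (a : L), ∀ m ∈ N, ρ.act n a m ∈ N

/-- `M` is a nilpotent module. -/
def Nilpotent (ρ : LCAModule C M) : Prop :=
  ∃ n : ℕ, 1 ≤ n ∧ ∀ l : List (L × ℕ), l.length = n → ∀ m : M, ρ.iterAct l m = 0

/-- `M` is finitely generated as an `L`-module. -/
def FG (ρ : LCAModule C M) : Prop :=
  ∃ s : Finset M, ∀ N : Submodule ℂ M, ρ.IsSub N → (s : Set M) ⊆ (N : Set M) → N = ⊤

/-- The `L`-submodule `N` is finitely generated as an `L`-module. -/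
def FGIn (ρ : LCAModule C M) (N : Submodule ℂ M) : Prop :=
  ∃ s : Finset M, (s : Set M) ⊆ (N : Set M) ∧
    ∀ P : Submodule ℂ M, ρ.IsSub P → (s : Set M) ⊆ (P : Set M) → N ≤ P

/-- `M` is finitely generated as a `ℂ[∂]`-module. -/
def FGPoly (ρ : LCAModule C M) : Prop :=
  ∃ s : Finset M, ∀ N : Submodule ℂ M, (∀ m ∈ N, ρ.DM m ∈ N) → (s : Set M) ⊆ (N : Set M) → N = ⊤

end LCAModule

/-- A family is `ℂ[∂]`-linearly independent. -/
def polyIndep {M : Type} [AddCommGroup M] [Module ℂ M] (DM : M →ₗ[ℂ] M)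
    {r : ℕ} (v : Fin r → M) : Prop :=
  ∀ q : Fin r → Polynomial ℂ,
    (∑ k, (q k).sum fun t c => c • (⇑DM)^[t] (v k)) = 0 → ∀ k, q k = 0

/-- The `ℂ[∂]`-rank of a submodule, in `ℕ∞`. -/
def polyRank {M : Type} [AddCommGroup M] [Module ℂ M] (DM : M →ₗ[ℂ] M)
    (N : Submodule ℂ M) : ℕ∞ :=
  ⨆ r ∈ {r : ℕ | ∃ v : Fin r → M, (∀ k, v k ∈ N) ∧ polyIndep DM v}, (r : ℕ∞)

/-- A graded module over a `ℤ`-graded Lie conformal algebra. -/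
structure GradedLCAModule {L : Type} [AddCommGroup L] [Module ℂ L] (C : GradedLCA L)
    (M : Type) [AddCommGroup M] [Module ℂ M]
    extends LCAModule C.toLieConformalAlgebra M where
  GM : ℤ → Submodule ℂ M
  internal : DirectSum.IsInternal GM
  dGrade : ∀ i : ℤ, ∀ m ∈ GM i, DM m ∈ GM i
  actGrade : ∀ (i j : ℤ) (n : ℕ), ∀ a ∈ C.G i, ∀ m ∈ GM j, act n a m ∈ GM (i + j)

namespace GradedLCAModule

variable {L : Type} [AddCommGroup L] [Module ℂ L] {C : GradedLCA L}
variable {M : Type} [AddCommGroup M] [Module ℂ M]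

/-- `Mⁿ = ⊕_{|i| ≤ n} M_i`. -/
def seg (ρ : GradedLCAModule C M) (n : ℕ) : Submodule ℂ M :=
  ⨆ i : ℤ, ⨆ _ : |i| ≤ (n : ℤ), ρ.GM i

/-- `e(M) = liminf (1/n) rank_{ℂ[∂]} Mⁿ`. -/
def eM (ρ : GradedLCAModule C M) : ℝ≥0∞ :=
  Filter.atTop.liminf fun n : ℕ => (polyRank ρ.DM (ρ.seg n) : ℝ≥0∞) / (n : ℝ≥0∞)

/-- Each `M_i` is a nilpotent `L₀`-module. -/
def Weightless (ρ : GradedLCAModule C M) : Prop :=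
  ∀ i : ℤ, ∃ n : ℕ, 1 ≤ n ∧ ∀ l : List (L × ℕ), l.length = n →
    (∀ q ∈ l, q.1 ∈ C.G 0) → ∀ m ∈ ρ.GM i, ρ.toLCAModule.iterAct l m = 0

/-- The submodule `I(M)` generated by all homogeneous `v` lying in the span of
the iterated actions of `L` on `v`. -/
def IM (ρ : GradedLCAModule C M) : Submodule ℂ M :=
  sInf {N : Submodule ℂ M | ρ.toLCAModule.IsSub N ∧
    {v : M | (∃ i : ℤ, v ∈ ρ.GM i) ∧
      v ∈ Submodule.span ℂ
        {w : M | ∃ l : List (L × ℕ), 1 ≤ l.length ∧ w = ρ.toLCAModule.iterAct l v}} ⊆ N}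

end GradedLCAModule

/-- The structure context for graded Lie conformal algebras all of whose
nonzero components are free of rank one over `ℂ[∂]`: fixed homogeneous bases
`bas i` and structure polynomials `sp i j ∈ ℂ[∂][λ]`, with `0 ∈ Supp(L)` and
`L₀` abelian. -/
structure RankOneContext (L : Type) [AddCommGroup L] [Module ℂ L]
    extends GradedLCA L where
  bas : ℤ → L
  sp : ℤ → ℤ → Polynomial (Polynomial ℂ)
  bas_mem : ∀ i : ℤ, bas i ∈ G i
  bas_zero : ∀ i : ℤ, G i = ⊥ → bas i = 0
  bas_indep : ∀ i : ℤ, G i ≠ ⊥ → LinearIndependent ℂ fun k : ℕ => (⇑D)^[k] (bas i)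
  bas_span : ∀ i : ℤ, G i ≠ ⊥ →
    G i = Submodule.span ℂ (Set.range fun k : ℕ => (⇑D)^[k] (bas i))
  sp_brkt : ∀ (i j : ℤ) (n : ℕ),
    prd n (bas i) (bas j)
      = (Nat.factorial n : ℂ) • (((sp i j).coeff n).sum fun k c => c • (⇑D)^[k] (bas (i + j)))
  sp_zero : ∀ i j : ℤ, (G i = ⊥ ∨ G j = ⊥ ∨ G (i + j) = ⊥) → sp i j = 0
  supp_zero : G 0 ≠ ⊥
  abelian0 : ∀ n : ℕ, ∀ x ∈ G 0, ∀ y ∈ G 0, prd n x y = 0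

/-- A Lie conformal algebra of class `𝒱`. -/
structure ClassV (L : Type) [AddCommGroup L] [Module ℂ L]
    extends RankOneContext L where
  supp_one : G 1 ≠ ⊥
  supp_negone : G (-1) ≠ ⊥
  genV : ∀ N : Submodule ℂ L, (∀ x ∈ N, D x ∈ N) →
    (∀ n : ℕ, ∀ a ∈ N, ∀ b ∈ N, prd n a b ∈ N) →
    G 1 ≤ N → G 0 ≤ N → G (-1) ≤ N → N = ⊤
  ne_m11 : sp (-1) 1 ≠ 0
  ne_01 : sp 0 1 ≠ 0

/-!
The Jacobi identity of a rank one graded algebra is a family of functional equations for the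
structure polynomials. Put `f = p_{0,1}` and `g = p_{-1,1}`. The Jacobi identity for
`(L₋₁, L₁, L₁)` expresses the product `p_{1,1}(∂ + λ, μ) p_{-1,2}(∂, λ)` through
`F(x) = g(-x) f(x)`. When `F = αx² + βx + γ` is not constant, this forces
`p_{1,1} = k(∂ + 2λ)`, and the Jacobi identity for `(L₋₁, L₁, L₂)` then gives `9αγ = 2β²`. So
`deg F = 1` is impossible, and for `deg F = 2` one gets `F = α(x - s)(x - 2s)`; the four ways of
distributing these two roots between `f` and `g` are the four algebras of type II.

Every later step is of the same kind: a product of `p_{1,j}` and `p_{-1,j+1}` in separated variables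
is known, which determines each factor up to a scalar, and these scalars are removed by rescaling
the bases. The negative degrees follow from the symmetry `Lᵢ ↔ L₋ᵢ`, and the remaining structure
polynomials from further instances of the Jacobi identity.

When `f` and `g` are constant, the same recursion runs in each direction as long as `L_{±2} ≠ 0`,
and `L_{±2} = 0` stops that half of the grading; the numbers of infinite halves `0`, `1`, `2` give
`Cur sl(2,ℂ)`, `M(1)` and `M(2)`.
-/
/-! ### The `λ`-bracket at a complex number -/

section DividedPower

/-- The divided power `lⁿ / n!`, the coefficient of `a_(n) b` in the `λ`-bracket at `λ = l`. -/
def dividedPower (l : ℂ) (n : ℕ) : ℂ := l ^ n * (n.factorial : ℂ)⁻¹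

theorem dividedPower_mul_factorial (l : ℂ) (n : ℕ) :
    dividedPower l n * (n.factorial : ℂ) = l ^ n :=
  inv_mul_cancel_right₀ (mod_cast n.factorial_ne_zero) _

theorem dividedPower_succ_mul (l : ℂ) (n : ℕ) :
    dividedPower l (n + 1) * ((n + 1 : ℕ) : ℂ) = l * dividedPower l n := by
  have hn : ((n + 1 : ℕ) : ℂ) ≠ 0 := mod_cast n.succ_ne_zero
  have hfact : (n.factorial : ℂ) ≠ 0 := mod_cast n.factorial_ne_zero
  rw [dividedPower, dividedPower, Nat.factorial_succ, Nat.cast_mul]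
  field_simp
  ring

theorem dividedPower_mul_choose (l : ℂ) {n k : ℕ} (hk : k ≤ n) :
    dividedPower l n * (n.choose k : ℂ) = dividedPower l k * dividedPower l (n - k) := by
  have hfact : (n.factorial : ℂ) ≠ 0 := mod_cast n.factorial_ne_zero
  rw [dividedPower, dividedPower, dividedPower, Nat.cast_choose ℂ hk,
    ← pow_mul_pow_sub l hk]
  field_simp

theorem dividedPower_add (l m : ℂ) (n : ℕ) :
    dividedPower (l + m) n =
      ∑ k ∈ Finset.range (n + 1), dividedPower l k * dividedPower m (n - k) := by
  rw [dividedPower, add_pow, Finset.sum_mul]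
  refine Finset.sum_congr rfl fun k hk ↦ ?_
  have hfact : (n.factorial : ℂ) ≠ 0 := mod_cast n.factorial_ne_zero
  rw [dividedPower, dividedPower, Nat.cast_choose ℂ (Finset.mem_range_succ_iff.1 hk)]
  field_simp

end DividedPower

theorem sum_range_sum_antidiagonal_eq {M : Type*} [AddCommMonoid M] (N : ℕ) (φ : ℕ → ℕ → M)
    (h : ∀ i j, N ≤ i + j → φ i j = 0) :
    ∑ n ∈ Finset.range N, ∑ k ∈ Finset.range (n + 1), φ k (n - k) =
      ∑ i ∈ Finset.range N, ∑ j ∈ Finset.range N, φ i j := by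
  rw [Finset.sum_range_diag_flip]
  refine Finset.sum_congr rfl fun i _ ↦ Finset.sum_subset (by simp) fun j _ hj ↦ h i j ?_
  simp only [Finset.mem_range] at hj
  omega

theorem coeff_taylor_X_comp_neg (q : ℂ[X][X]) (n : ℕ) :
    (taylor X (q.comp (Polynomial.C (-1) * X))).coeff n =
      ∑ j ∈ Finset.range (q.natDegree + 1),
        ((-1 : ℂ) ^ (n + j) * (n + j).choose n) • (X ^ j * q.coeff (n + j)) := by
  have hdeg : (hasseDeriv n (q.comp (Polynomial.C (-1) * X))).natDegree < q.natDegree + 1 := by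
    refine Nat.lt_succ_of_le ((natDegree_hasseDeriv_le _ n).trans <| (Nat.sub_le _ _).trans ?_)
    exact natDegree_comp_le.trans
      (mul_le_of_le_one_right' ((natDegree_C_mul_le _ _).trans natDegree_X_le))
  rw [taylor_coeff, eval_eq_sum_range' hdeg]
  refine Finset.sum_congr rfl fun j _ ↦ ?_
  rw [hasseDeriv_coeff, comp_C_mul_X_coeff, add_comm j n, ← C_mul']
  simp only [map_mul, map_pow, map_neg, map_one, map_natCast]
  ring

namespace LieConformalAlgebra

open Filter

variable {L : Type} [AddCommGroup L] [Module ℂ L] {C : LieConformalAlgebra L}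

theorem applyP_eq_aeval (C : LieConformalAlgebra L) (q : ℂ[X]) (x : L) :
    C.applyP q x = aeval C.D q x := by
  simp [applyP, aeval_eq_sum_range, sum_over_range, Module.End.pow_apply]

theorem BracketEq.swap {a b t : L} {q : ℂ[X][X]} (h : C.BracketEq b a t q) :
    C.BracketEq a b t (-taylor X (q.comp (Polynomial.C (-1) * X))) := fun n ↦ by
  rw [C.skew, finsum_eq_sum_of_support_subset (s := Finset.range (q.natDegree + 1)), coeff_neg,
    coeff_taylor_X_comp_neg, applyP_eq_aeval, map_neg, LinearMap.neg_apply, smul_neg,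
    map_sum, LinearMap.sum_apply, Finset.smul_sum, neg_inj]
  · refine Finset.sum_congr rfl fun j _ ↦ ?_
    rw [h, C.applyP_eq_aeval, ← Module.End.pow_apply, map_smul, map_smul, map_mul, aeval_X_pow,
      LinearMap.smul_apply, Module.End.mul_apply, smul_smul, smul_smul, Nat.cast_add_choose]
    have hn : (n.factorial : ℂ) ≠ 0 := mod_cast n.factorial_ne_zero
    congr 1
    field_simp
  · refine Function.support_subset_iff'.2 fun j hj ↦ ?_
    have hcoeff : q.coeff (n + j) = 0 := coeff_eq_zero_of_natDegree_lt <| by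
      simp only [Finset.coe_range, Set.mem_Iio] at hj
      omega
    rw [h, hcoeff, applyP_eq_aeval, map_zero, LinearMap.zero_apply, smul_zero,
      ← Module.End.pow_apply, map_zero, smul_zero]

variable (C)

theorem finite_support_dividedPower_smul_prd (l : ℂ) (a b : L) :
    (Function.support fun n ↦ dividedPower l n • C.prd n a b).Finite := by
  obtain ⟨N, hN⟩ := C.bound a b
  refine (Finset.range N).finite_toSet.subset fun n hn ↦ ?_
  by_contra hNn
  exact hn (by simp [hN n (by simpa using hNn)])

/-- The `λ`-bracket `[a_λ b] = ∑ₙ (λⁿ/n!) a_(n) b`, evaluated at the complex number `λ = l`. -/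
def lambdaBracket (l : ℂ) : L →ₗ[ℂ] L →ₗ[ℂ] L :=
  LinearMap.mk₂ ℂ (fun a b ↦ ∑ᶠ n, dividedPower l n • C.prd n a b)
    (fun a a' b ↦ by
      rw [← finsum_add_distrib (C.finite_support_dividedPower_smul_prd l a b)
        (C.finite_support_dividedPower_smul_prd l a' b)]
      simp)
    (fun c a b ↦ by simp [smul_finsum, smul_comm c])
    (fun a b b' ↦ by
      rw [← finsum_add_distrib (C.finite_support_dividedPower_smul_prd l a b)
        (C.finite_support_dividedPower_smul_prd l a b')]
      simp)
    (fun c a b ↦ by simp [smul_finsum, smul_comm c])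

theorem lambdaBracket_eq_sum (l : ℂ) {a b : L} {N : ℕ} (hN : ∀ n, N ≤ n → C.prd n a b = 0) :
    C.lambdaBracket l a b = ∑ n ∈ Finset.range N, dividedPower l n • C.prd n a b := by
  refine finsum_eq_sum_of_support_subset _ fun n hn ↦ ?_
  by_contra hNn
  exact hn (by simp [hN n (by simpa using hNn)])

theorem lambdaBracket_D_left (l : ℂ) (a b : L) :
    C.lambdaBracket l (C.D a) b = (-l) • C.lambdaBracket l a b := by
  obtain ⟨N, hN⟩ := C.bound a b
  have hN' : ∀ n, N + 1 ≤ n → C.prd n (C.D a) b = 0 := fun n hn ↦ by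
    rw [C.sesq, hN _ (by omega), smul_zero]
  rw [lambdaBracket_eq_sum C l hN, lambdaBracket_eq_sum C l hN', Finset.sum_range_succ',
    Finset.smul_sum]
  simp [C.sesq, smul_smul, dividedPower_succ_mul, -Nat.cast_add]

theorem lambdaBracket_D_right (l : ℂ) (a b : L) :
    C.lambdaBracket l a (C.D b) = C.D (C.lambdaBracket l a b) + l • C.lambdaBracket l a b := by
  obtain ⟨N, hN⟩ := C.bound a b
  have hN' : ∀ n, N + 1 ≤ n → C.prd n a (C.D b) = 0 := fun n hn ↦ by
    rw [C.sesq', hN _ (by omega), hN _ (by omega), smul_zero, map_zero, add_zero]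
  have hderiv : ∑ n ∈ Finset.range (N + 1), (dividedPower l n * (n : ℂ)) • C.prd (n - 1) a b =
      l • C.lambdaBracket l a b := by
    rw [Finset.sum_range_succ', lambdaBracket_eq_sum C l hN, Finset.smul_sum]
    simp [dividedPower_succ_mul, smul_smul, -Nat.cast_add]
  rw [← hderiv, lambdaBracket_eq_sum C l hN',
    lambdaBracket_eq_sum C l (N := N + 1) fun n hn ↦ hN n (by omega), map_sum,
    ← Finset.sum_add_distrib]
  simp [C.sesq', smul_smul]

theorem lambdaBracket_aeval_left (l : ℂ) (q : ℂ[X]) (a b : L) :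
    C.lambdaBracket l (aeval C.D q a) b = q.eval (-l) • C.lambdaBracket l a b := by
  induction q using Polynomial.induction_on generalizing a with
  | C c => simp [Module.algebraMap_end_apply]
  | add p q hp hq => simp [hp, hq, add_smul]
  | monomial n c ih =>
    rw [pow_succ, ← mul_assoc, map_mul, aeval_X, Module.End.mul_apply, ih, lambdaBracket_D_left,
      smul_smul, eval_mul (q := X), eval_X]

theorem lambdaBracket_aeval_right (l : ℂ) (q : ℂ[X]) (a b : L) :
    C.lambdaBracket l a (aeval C.D q b) =
      aeval C.D (q.comp (X + Polynomial.C l)) (C.lambdaBracket l a b) := by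
  induction q using Polynomial.induction_on generalizing b with
  | C c => simp [Module.algebraMap_end_apply]
  | add p q hp hq => simp [hp, hq]
  | monomial n c ih =>
    have hX : C.D (C.lambdaBracket l a b) + l • C.lambdaBracket l a b =
        aeval C.D (X + Polynomial.C l) (C.lambdaBracket l a b) := by
      simp [Module.algebraMap_end_apply]
    rw [pow_succ, ← mul_assoc, map_mul, aeval_X, Module.End.mul_apply, ih, lambdaBracket_D_right,
      hX, ← Module.End.mul_apply, ← map_mul, mul_comp (q := X), X_comp]

/-! ### The Jacobi identity for the `λ`-bracket -/

theorem eventually_prd_eq_zero (a b : L) : ∀ᶠ N in atTop, ∀ n, N ≤ n → C.prd n a b = 0 :=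
  eventually_forall_ge_atTop.2 (eventually_atTop.2 (C.bound a b))

theorem eventually_prd_prd_right_eq_zero (a b c : L) :
    ∀ᶠ N in atTop, ∀ p, N ≤ p → ∀ n, C.prd p a (C.prd n b c) = 0 := by
  obtain ⟨M, hM⟩ := C.bound b c
  have hlt : ∀ᶠ N in atTop, ∀ n ∈ Finset.range M, ∀ p, N ≤ p → C.prd p a (C.prd n b c) = 0 :=
    (eventually_all_finset _).2 fun n _ ↦ C.eventually_prd_eq_zero a (C.prd n b c)
  filter_upwards [hlt] with N hN p hp n
  rcases lt_or_ge n M with hn | hn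
  · exact hN n (Finset.mem_range.2 hn) p hp
  · rw [hM n hn, map_zero]

theorem eventually_prd_prd_left_eq_zero (a b c : L) :
    ∀ᶠ N in atTop, ∀ p, N ≤ p → ∀ n, C.prd p (C.prd n a b) c = 0 := by
  obtain ⟨M, hM⟩ := C.bound a b
  have hlt : ∀ᶠ N in atTop, ∀ n ∈ Finset.range M, ∀ p, N ≤ p → C.prd p (C.prd n a b) c = 0 :=
    (eventually_all_finset _).2 fun n _ ↦ C.eventually_prd_eq_zero (C.prd n a b) c
  filter_upwards [hlt] with N hN p hp n
  rcases lt_or_ge n M with hn | hn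
  · exact hN n (Finset.mem_range.2 hn) p hp
  · rw [hM n hn, map_zero, LinearMap.zero_apply]

theorem lambdaBracket_lambdaBracket_right (l m : ℂ) {a b c : L} {N : ℕ}
    (hbc : ∀ n, N ≤ n → C.prd n b c = 0)
    (habc : ∀ p, N ≤ p → ∀ n, C.prd p a (C.prd n b c) = 0) :
    C.lambdaBracket l a (C.lambdaBracket m b c) =
      ∑ n ∈ Finset.range N, ∑ p ∈ Finset.range N,
        (dividedPower l p * dividedPower m n) • C.prd p a (C.prd n b c) := by
  rw [C.lambdaBracket_eq_sum m hbc, map_sum]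
  refine Finset.sum_congr rfl fun n _ ↦ ?_
  rw [map_smul, C.lambdaBracket_eq_sum l fun p hp ↦ habc p hp n, Finset.smul_sum]
  simp only [smul_smul, mul_comm]

/-- The general term of the expansion of `[[a_λ b]_{λ+μ} c]` at `λ = l`, `μ = m`. -/
def jacobiTerm (l m : ℂ) (a b c : L) (j p n : ℕ) : L :=
  (dividedPower l j * dividedPower l p * dividedPower m n) • C.prd (p + n) (C.prd j a b) c

theorem lambdaBracket_lambdaBracket_left (l m : ℂ) {a b c : L} {N : ℕ}
    (hab : ∀ n, N ≤ n → C.prd n a b = 0)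
    (habc : ∀ p, N ≤ p → ∀ n, C.prd p (C.prd n a b) c = 0) :
    C.lambdaBracket (l + m) (C.lambdaBracket l a b) c =
      ∑ j ∈ Finset.range N, ∑ p ∈ Finset.range N, ∑ n ∈ Finset.range N,
        C.jacobiTerm l m a b c j p n := by
  rw [C.lambdaBracket_eq_sum l hab, map_sum, LinearMap.sum_apply]
  refine Finset.sum_congr rfl fun j _ ↦ ?_
  rw [← sum_range_sum_antidiagonal_eq N (C.jacobiTerm l m a b c j) fun p n hpn ↦ by
      rw [jacobiTerm, habc _ hpn, smul_zero],
    map_smul, LinearMap.smul_apply, C.lambdaBracket_eq_sum (l + m) fun p hp ↦ habc p hp j,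
    Finset.smul_sum]
  refine Finset.sum_congr rfl fun k _ ↦ ?_
  rw [smul_smul, dividedPower_add, Finset.mul_sum, Finset.sum_smul]
  refine Finset.sum_congr rfl fun p hp ↦ ?_
  rw [jacobiTerm, Nat.add_sub_cancel' (Finset.mem_range_succ_iff.1 hp), mul_assoc]

theorem sum_dividedPower_smul_commutator (l m : ℂ) {a b c : L} {N : ℕ}
    (hvanish : ∀ j p n, N ≤ j + p → C.prd (p + n) (C.prd j a b) c = 0) :
    ∑ n ∈ Finset.range N, ∑ p ∈ Finset.range N, (dividedPower l p * dividedPower m n) •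
        (C.prd p a (C.prd n b c) - C.prd n b (C.prd p a c)) =
      ∑ j ∈ Finset.range N, ∑ p ∈ Finset.range N, ∑ n ∈ Finset.range N,
        C.jacobiTerm l m a b c j p n := by
  simp_rw [Finset.sum_comm (s := Finset.range N) (t := Finset.range N)
    (f := fun p n ↦ C.jacobiTerm l m a b c _ p n)]
  rw [Finset.sum_comm (f := fun j n ↦ ∑ p ∈ Finset.range N, C.jacobiTerm l m a b c j p n)]
  refine Finset.sum_congr rfl fun n _ ↦ ?_
  rw [← sum_range_sum_antidiagonal_eq N (C.jacobiTerm l m a b c · · n) fun j p hjp ↦ by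
    rw [jacobiTerm, hvanish j p n hjp, smul_zero]]
  refine Finset.sum_congr rfl fun p _ ↦ ?_
  rw [C.jacobi, Finset.smul_sum]
  refine Finset.sum_congr rfl fun j hj ↦ ?_
  have hjp : j ≤ p := Finset.mem_range_succ_iff.1 hj
  rw [jacobiTerm, smul_smul, mul_right_comm, dividedPower_mul_choose l hjp,
    show p + n - j = p - j + n by omega]

theorem lambdaBracket_jacobi (l m : ℂ) (a b c : L) :
    C.lambdaBracket l a (C.lambdaBracket m b c) =
      C.lambdaBracket (l + m) (C.lambdaBracket l a b) c +
        C.lambdaBracket m b (C.lambdaBracket l a c) := by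
  obtain ⟨N, hab, hbc, hac, hab_c, ha_bc, hb_ac⟩ := ((C.eventually_prd_eq_zero a b).and <|
    (C.eventually_prd_eq_zero b c).and <| (C.eventually_prd_eq_zero a c).and <|
    (C.eventually_prd_prd_left_eq_zero a b c).and <|
    (C.eventually_prd_prd_right_eq_zero a b c).and
    (C.eventually_prd_prd_right_eq_zero b a c)).exists
  have hvanish : ∀ j p n, 2 * N ≤ j + p → C.prd (p + n) (C.prd j a b) c = 0 := fun j p n hjp ↦ by
    rcases le_or_gt N j with hj | hj
    · rw [hab j hj, map_zero, LinearMap.zero_apply]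
    · exact hab_c _ (by omega) j
  rw [C.lambdaBracket_lambdaBracket_left l m (N := 2 * N) (fun n hn ↦ hab n (by omega))
      (fun p hp ↦ hab_c p (by omega)), ← C.sum_dividedPower_smul_commutator l m hvanish,
    C.lambdaBracket_lambdaBracket_right l m (N := 2 * N) (fun n hn ↦ hbc n (by omega))
      (fun p hp ↦ ha_bc p (by omega)),
    C.lambdaBracket_lambdaBracket_right m l (N := 2 * N) (fun n hn ↦ hac n (by omega))
      (fun p hp ↦ hb_ac p (by omega)),
    Finset.sum_comm (f := fun n p ↦ (dividedPower m p * dividedPower l n) • _)]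
  simp only [← Finset.sum_add_distrib, mul_comm (dividedPower m _), ← smul_add, sub_add_cancel]

variable {C} in
theorem BracketEq.lambdaBracket_eq {a b t : L} {p : ℂ[X][X]} (h : C.BracketEq a b t p) (l : ℂ) :
    C.lambdaBracket l a b = aeval C.D (p.eval (Polynomial.C l)) t := by
  have hN : ∀ n, p.natDegree + 1 ≤ n → C.prd n a b = 0 := fun n hn ↦ by
    rw [h n, coeff_eq_zero_of_natDegree_lt (by omega)]
    simp [applyP]
  rw [lambdaBracket_eq_sum C l hN, eval_eq_sum_range, map_sum, LinearMap.sum_apply]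
  refine Finset.sum_congr rfl fun n _ ↦ ?_
  rw [h n, smul_smul, dividedPower_mul_factorial, applyP_eq_aeval, mul_comm, ← C_pow, C_mul',
    map_smul, LinearMap.smul_apply]

end LieConformalAlgebra
/-! ### Structure polynomials -/

theorem eq_of_evalEval_eq {p q : ℂ[X][X]} (h : ∀ x y, evalEval x y p = evalEval x y q) :
    p = q := by
  refine Polynomial.eq_of_infinite_eval_eq _ _
    ((Set.infinite_range_of_injective C_injective).mono ?_)
  rintro _ ⟨y, rfl⟩
  exact Polynomial.funext fun x ↦ h x y

theorem eval_eval_eq_evalEval (p : ℂ[X][X]) (r : ℂ[X]) (x : ℂ) :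
    (p.eval r).eval x = evalEval x (r.eval x) p := by
  simp [evalEval, eval_eq_sum_range (p := p), eval_finsetSum]

theorem eq_zero_or_eq_zero_of_evalEval_mul_eq_zero {p q : ℂ[X][X]}
    (h : ∀ x l m, evalEval (x + m) l p * evalEval x m q = 0) : p = 0 ∨ q = 0 := by
  refine or_iff_not_imp_left.2 fun hp ↦ eq_of_evalEval_eq fun x y ↦ ?_
  obtain ⟨a, b, hab⟩ : ∃ a b, evalEval a b p ≠ 0 := by
    by_contra! hzero
    exact hp (eq_of_evalEval_eq fun a b ↦ by simp [hzero a b])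
  have hmul : taylor x (p.eval (Polynomial.C b)) * q.map (evalRingHom x) = 0 :=
    Polynomial.funext fun m ↦ by
      simpa [evalEval, map_evalRingHom_eval, taylor_eval, add_comm m] using h x b m
  have hp' : p.eval (Polynomial.C b) ≠ 0 := fun h0 ↦ hab (by rw [evalEval, h0, eval_zero])
  rw [← map_evalRingHom_eval,
    (mul_eq_zero.1 hmul).resolve_left ((taylor_eq_zero x _).not.2 hp')]
  simp

@[simp]
theorem evalEval_Pd (x y : ℂ) : evalEval x y Pd = x := by simp [Pd, evalEval_C]

@[simp]
theorem evalEval_Pl (x y : ℂ) : evalEval x y Pl = y := by simp [Pl]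

@[simp]
theorem evalEval_Pc (x y a : ℂ) : evalEval x y (Pc a) = a := by simp [Pc]

namespace RankOneContext

variable {L : Type} [AddCommGroup L] [Module ℂ L] (R : RankOneContext L)

theorem bracketEq_bas (i j : ℤ) :
    R.BracketEq (R.bas i) (R.bas j) (R.bas (i + j)) (R.sp i j) :=
  fun n ↦ R.sp_brkt i j n

theorem eq_zero_of_aeval_bas_eq_zero {i : ℤ} (hi : R.G i ≠ ⊥) {q : ℂ[X]}
    (h : aeval R.D q (R.bas i) = 0) : q = 0 := by
  rw [← R.applyP_eq_aeval] at h
  have hcoeff := linearIndependent_iff'.1 (R.bas_indep i hi) q.support q.coeff h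
  ext k
  by_cases hk : k ∈ q.support
  · exact hcoeff k hk
  · simpa using hk

theorem aeval_bas_injective {i : ℤ} (hi : R.G i ≠ ⊥) :
    Function.Injective fun q : ℂ[X] ↦ aeval R.D q (R.bas i) := fun q r h ↦ by
  refine sub_eq_zero.1 (R.eq_zero_of_aeval_bas_eq_zero hi ?_)
  rw [map_sub, LinearMap.sub_apply, sub_eq_zero.2 h]

variable {R} in
theorem eq_of_bracketEq {i : ℤ} (hi : R.G i ≠ ⊥) {a b : L} {q r : ℂ[X][X]}
    (hq : R.BracketEq a b (R.bas i) q) (hr : R.BracketEq a b (R.bas i) r) : q = r := by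
  ext1 n
  refine R.aeval_bas_injective hi (smul_right_injective L
    (mod_cast n.factorial_ne_zero : (n.factorial : ℂ) ≠ 0) ?_)
  simp only [← R.applyP_eq_aeval, ← hq n, ← hr n]

theorem sp_skew (i j : ℤ) : R.sp i j = -taylor X ((R.sp j i).comp (Polynomial.C (-1) * X)) := by
  by_cases hbot : R.G (i + j) = ⊥
  · rw [R.sp_zero i j (.inr (.inr hbot)), R.sp_zero j i (.inr (.inr (add_comm i j ▸ hbot)))]
    simp
  · exact eq_of_bracketEq hbot (R.bracketEq_bas i j)
      (LieConformalAlgebra.BracketEq.swap (add_comm j i ▸ R.bracketEq_bas j i))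

/-- The structure polynomial `p_{i,j}(∂, λ)` as a function of `∂ = x` and `λ = y`. -/
def p (i j : ℤ) (x y : ℂ) : ℂ := evalEval x y (R.sp i j)

theorem p_skew (i j : ℤ) (x y : ℂ) : R.p i j x y = -R.p j i x (-y - x) := by
  rw [p, R.sp_skew, evalEval_neg, evalEval, taylor_eval, eval_comp, eval_eval_eq_evalEval, p]
  congr 2
  simp [sub_eq_add_neg, add_comm]

variable {R} in
theorem p_eq_zero_of_bot {i j : ℤ} (h : R.G i = ⊥ ∨ R.G j = ⊥ ∨ R.G (i + j) = ⊥) (x y : ℂ) :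
    R.p i j x y = 0 := by
  rw [p, R.sp_zero i j h, evalEval_zero]

theorem p_jacobi (i j k : ℤ) {ij jk ik : ℤ} (hij : i + j = ij) (hjk : j + k = jk)
    (hik : i + k = ik) (x l m : ℂ) :
    R.p j k (x + l) m * R.p i jk x l =
      R.p i j (-l - m) l * R.p ij k x (l + m) + R.p i k (x + m) l * R.p j ik x m := by
  subst hij hjk hik
  have hj : j + (i + k) = i + (j + k) := by ring
  have hk : i + j + k = i + (j + k) := by ring
  by_cases hbot : R.G (i + (j + k)) = ⊥
  · rw [p_eq_zero_of_bot (i := i) (j := j + k) (.inr (.inr hbot)),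
      p_eq_zero_of_bot (i := i + j) (j := k) (.inr (.inr (hk ▸ hbot))),
      p_eq_zero_of_bot (i := j) (j := i + k) (.inr (.inr (hj ▸ hbot)))]
    simp
  have hbrkt := R.lambdaBracket_jacobi l m (R.bas i) (R.bas j) (R.bas k)
  simp only [(R.bracketEq_bas _ _).lambdaBracket_eq, R.lambdaBracket_aeval_left,
    R.lambdaBracket_aeval_right, hj, hk] at hbrkt
  rw [← Module.End.mul_apply, ← Module.End.mul_apply, ← map_mul, ← map_mul, ← LinearMap.smul_apply,
    ← map_smul, ← LinearMap.add_apply, ← map_add] at hbrkt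
  have heval := congrArg (Polynomial.eval x) (R.aeval_bas_injective hbot hbrkt)
  simp only [eval_add, eval_mul, eval_comp, eval_smul, eval_X, eval_C, smul_eq_mul,
    neg_add'] at heval
  exact heval

theorem sp_zero_zero : R.sp 0 0 = 0 :=
  eq_of_bracketEq R.supp_zero (R.bracketEq_bas 0 0) fun n ↦ by
    rw [R.abelian0 n _ (R.bas_mem 0) _ (R.bas_mem 0), R.applyP_eq_aeval]
    simp

theorem isFreePolyBasis_bas {ι : Type} {e : ι → ℤ} (he : Function.Injective e)
    (hne : ∀ q, R.G (e q) ≠ ⊥) (hcover : ∀ i, R.G i ≠ ⊥ → ∃ q, e q = i) :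
    R.IsFreePolyBasis fun q ↦ R.bas (e q) := by
  constructor
  · have hindep : LinearIndependent ℂ fun q : Σ _ : ι, ℕ ↦ (⇑R.D)^[q.2] (R.bas (e q.1)) := by
      refine linearIndependent_iUnion_finite (fun q ↦ R.bas_indep (e q) (hne q)) fun q t _ hq ↦ ?_
      simp only [← R.bas_span _ (hne _)]
      exact (R.internal.submodule_iSupIndep.comp he).disjoint_biSup hq
    exact hindep.comp _ (Equiv.sigmaEquivProd ι ℕ).symm.injective
  · refine eq_top_iff.2 (R.internal.submodule_iSup_eq_top.symm.le.trans (iSup_le fun i ↦ ?_))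
    rcases eq_or_ne (R.G i) ⊥ with hi | hi
    · exact hi.le.trans bot_le
    · obtain ⟨q, rfl⟩ := hcover i hi
      rw [R.bas_span _ (hne q)]
      exact Submodule.span_mono (Set.range_subset_iff.2 fun k ↦ ⟨(q, k), rfl⟩)

variable {R} in
theorem exists_basis_of_p_eq (hG : ∀ i, R.G i ≠ ⊥) {q : ℤ → ℤ → ℂ[X][X]}
    (hq : ∀ i j x y, R.p i j x y = evalEval x y (q i j)) :
    ∃ v : ℤ → L, R.IsFreePolyBasis v ∧
      ∀ i j, R.BracketEq (v i) (v j) (v (i + j)) (q i j) :=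
  ⟨R.bas, R.isFreePolyBasis_bas Function.injective_id hG fun i _ ↦ ⟨i, rfl⟩, fun i j ↦
    eq_of_evalEval_eq (hq i j) ▸ R.bracketEq_bas i j⟩

end RankOneContext

/-! ### Rescaling and reversing the grading -/

theorem LieConformalAlgebra.BracketEq.units_smul {L : Type} [AddCommGroup L] [Module ℂ L]
    {C : LieConformalAlgebra L} {a b t : L} {q : ℂ[X][X]} (h : C.BracketEq a b t q) (u v w : ℂˣ) :
    C.BracketEq (u • a) (v • b) (w • t) (Pc (u * v / w : ℂˣ) * q) := fun n ↦ by
  simp only [Units.smul_def, map_smul, LinearMap.smul_apply, h n, C.applyP_eq_aeval, Pc,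
    coeff_C_mul, map_mul, aeval_C, smul_smul, Module.algebraMap_end_apply, Module.End.mul_apply]
  congr 1
  simp only [Units.val_div_eq_div_val, Units.val_mul]
  field_simp

namespace ClassV

variable {L : Type} [AddCommGroup L] [Module ℂ L] (C : ClassV L)

theorem p_zero_zero (x y : ℂ) : C.p 0 0 x y = 0 := by
  rw [RankOneContext.p, C.sp_zero_zero, evalEval_zero]

theorem sp_zero_neg_one_ne_zero : C.sp 0 (-1) ≠ 0 := fun h ↦ by
  refine (eq_zero_or_eq_zero_of_evalEval_mul_eq_zero fun x l m ↦ ?_).elim C.ne_01 C.ne_m11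
  have hjac := C.p_jacobi 0 (-1) 1 (ij := -1) (jk := 0) (ik := 1) rfl rfl rfl x l m
  simp only [C.p_zero_zero, mul_zero] at hjac
  simp only [RankOneContext.p, h, evalEval_zero, zero_mul, zero_add] at hjac
  exact hjac.symm

/-- The same graded Lie conformal algebra with respect to the `ℂ[∂]`-bases `cᵢLᵢ`. -/
def rescale (c : ℤ → ℂˣ) : ClassV L where
  toGradedLCA := C.toGradedLCA
  bas i := c i • C.bas i
  sp i j := Pc (c i * c j / c (i + j) : ℂˣ) * C.sp i j
  bas_mem i := (C.G i).smul_mem (c i : ℂ) (C.bas_mem i)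
  bas_zero i hi := by rw [C.bas_zero i hi, smul_zero]
  bas_indep i hi := by
    convert (C.bas_indep i hi).units_smul fun _ ↦ c i using 2 with k
    simp [Units.smul_def, ← Module.End.pow_apply]
  bas_span i hi := by
    rw [C.bas_span i hi, ← Submodule.span_smul_eq_of_isUnit _ _ (c i).isUnit, Set.smul_set_range]
    simp [Units.smul_def, ← Module.End.pow_apply]
  sp_brkt i j := (C.bracketEq_bas i j).units_smul (c i) (c j) (c (i + j))
  sp_zero i j h := by rw [C.sp_zero i j h, mul_zero]
  supp_zero := C.supp_zero
  abelian0 := C.abelian0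
  supp_one := C.supp_one
  supp_negone := C.supp_negone
  genV := C.genV
  ne_m11 := mul_ne_zero (by simp [Pc]) C.ne_m11
  ne_01 := mul_ne_zero (by simp [Pc]) C.ne_01

theorem rescale_p (c : ℤ → ℂˣ) (i j : ℤ) (x y : ℂ) :
    (C.rescale c).p i j x y = c i * c j / c (i + j) * C.p i j x y := by
  simp [RankOneContext.p, rescale, evalEval_mul]

/-- The same Lie conformal algebra with the opposite grading `i ↦ L₋ᵢ`. -/
def opposite : ClassV L where
  toLieConformalAlgebra := C.toLieConformalAlgebra
  G i := C.G (-i)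
  internal := by
    rw [DirectSum.isInternal_submodule_iff_iSupIndep_and_iSup_eq_top]
    exact ⟨C.internal.submodule_iSupIndep.comp neg_injective,
      ((Equiv.neg ℤ).iSup_comp (g := C.G)).trans C.internal.submodule_iSup_eq_top⟩
  dGrade i := C.dGrade (-i)
  prdGrade i j n a ha b hb := neg_add i j ▸ C.prdGrade (-i) (-j) n a ha b hb
  bas i := C.bas (-i)
  sp i j := C.sp (-i) (-j)
  bas_mem i := C.bas_mem (-i)
  bas_zero i := C.bas_zero (-i)
  bas_indep i := C.bas_indep (-i)
  bas_span i := C.bas_span (-i)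
  sp_brkt i j n := neg_add i j ▸ C.sp_brkt (-i) (-j) n
  sp_zero i j h := C.sp_zero (-i) (-j) (neg_add i j ▸ h)
  supp_zero := by simpa using C.supp_zero
  abelian0 n x hx y hy := C.abelian0 n x (by simpa using hx) y (by simpa using hy)
  supp_one := C.supp_negone
  supp_negone := C.supp_one
  genV N hD hprd h1 h0 hm1 := C.genV N hD hprd hm1 h0 h1
  ne_m11 h := C.ne_m11 <| by
    rw [C.sp_skew, show C.sp 1 (-1) = 0 from h, zero_comp, map_zero, neg_zero]
  ne_01 := C.sp_zero_neg_one_ne_zero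

/-- The opposite grading together with the change of bases `Lᵢ ↦ -Lᵢ`, which leaves `p_{0,1}(λ)`
and `p_{-1,1}(∂)` unchanged. -/
def reverse : ClassV L := C.opposite.rescale fun _ ↦ -1

theorem reverse_p (i j : ℤ) (x y : ℂ) : C.reverse.p i j x y = -C.p (-i) (-j) x y := by
  rw [reverse, rescale_p]
  simp [opposite, RankOneContext.p]

end ClassV

/-! ### Consequences of generation in degrees `-1`, `0`, `1` -/

namespace RankOneContext

variable {L : Type} [AddCommGroup L] [Module ℂ L] (R : RankOneContext L)

theorem G_le_of_bas_mem {i : ℤ} {N : Submodule ℂ L} (hD : N ≤ N.comap R.D) (hi : R.bas i ∈ N) :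
    R.G i ≤ N := by
  by_cases hbot : R.G i = ⊥
  · exact hbot.le.trans bot_le
  rw [R.bas_span i hbot, Submodule.span_le]
  rintro _ ⟨k, rfl⟩
  induction k with
  | zero => exact hi
  | succ k ih => simpa only [Function.iterate_succ_apply'] using! hD ih

variable {R} in
theorem prd_eq_zero_of_sp_eq_zero {i j : ℤ} (h : R.sp i j = 0) (n : ℕ) {a b : L} (ha : a ∈ R.G i)
    (hb : b ∈ R.G j) : R.prd n a b = 0 := by
  have hright : R.G j ≤ ⨅ n, LinearMap.ker (R.prd n (R.bas i)) := by
    refine R.G_le_of_bas_mem (fun b hb ↦ ?_) ?_ <;>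
      simp_all [R.sesq', R.sp_brkt]
  have hleft : R.G i ≤ ⨅ n, LinearMap.ker ((R.prd n).flip b) := by
    refine R.G_le_of_bas_mem (fun a ha ↦ ?_) ?_
    · simp_all [R.sesq]
    · simpa using hright hb
  have := hleft ha
  simp only [Submodule.mem_iInf, LinearMap.mem_ker, LinearMap.flip_apply] at this
  exact this n

end RankOneContext

namespace ClassV

variable {L : Type} [AddCommGroup L] [Module ℂ L] {C : ClassV L}

theorem iSup_G_le_one_eq_top (h : C.sp 1 1 = 0) : ⨆ i : Set.Iic (1 : ℤ), C.G i = ⊤ := by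
  set N := ⨆ i : Set.Iic (1 : ℤ), C.G i with hN
  have hle {i : ℤ} (hi : i ≤ 1) : C.G i ≤ N := le_iSup (fun i : Set.Iic (1 : ℤ) ↦ C.G i) ⟨i, hi⟩
  have hD : N ≤ N.comap C.D := iSup_le fun i x hx ↦ hle i.2 (C.dGrade i x hx)
  have hprd (n : ℕ) : Submodule.map₂ (C.prd n) N N ≤ N := by
    rw [hN, Submodule.map₂_iSup_left, ← hN]
    refine iSup_le fun i ↦ ?_
    rw [hN, Submodule.map₂_iSup_right, ← hN]
    refine iSup_le fun j ↦ Submodule.map₂_le.2 fun a ha b hb ↦ ?_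
    obtain ⟨⟨i, hi : i ≤ 1⟩, ⟨j, hj : j ≤ 1⟩⟩ := i, j
    by_cases hij : i + j ≤ 1
    · exact hle hij (C.prdGrade i j n a ha b hb)
    · obtain ⟨rfl, rfl⟩ : i = 1 ∧ j = 1 := by lia
      rw [RankOneContext.prd_eq_zero_of_sp_eq_zero h n ha hb]
      exact N.zero_mem
  exact C.genV N hD (fun n a ha b hb ↦ hprd n (Submodule.apply_mem_map₂ _ ha hb))
    (hle le_rfl) (hle zero_le_one) (hle (by lia))

theorem G_eq_bot_of_sp_one_one_eq_zero (h : C.sp 1 1 = 0) {i : ℤ} (hi : 2 ≤ i) : C.G i = ⊥ := by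
  have hle : ⨆ j : Set.Iic (1 : ℤ), C.G j ≤ ⨆ (j) (_ : j ≠ i), C.G j :=
    iSup_le fun j ↦ le_iSup₂_of_le (j : ℤ) (by have : (j : ℤ) ≤ 1 := j.2; lia) le_rfl
  have hdisj := C.internal.submodule_iSupIndep i
  rwa [top_le_iff.1 ((iSup_G_le_one_eq_top h).symm.le.trans hle), disjoint_top] at hdisj

theorem G_eq_bot_of_G_two_eq_bot (h : C.G 2 = ⊥) {i : ℤ} (hi : 2 ≤ i) : C.G i = ⊥ :=
  G_eq_bot_of_sp_one_one_eq_zero (C.sp_zero 1 1 (.inr (.inr h))) hi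

/-! ### The polynomials `p_{0,1}(λ)` and `p_{-1,1}(∂)` -/

variable (C) in
/-- `p_{0,1}(λ) = f(λ)` and `p_{-1,1}(∂) = g(∂)`. -/
structure HasBasePolynomials (f g : ℂ[X]) : Prop where
  p_zero_one : ∀ x y, C.p 0 1 x y = f.eval y
  p_neg_one_one : ∀ x y, C.p (-1) 1 x y = g.eval x

namespace HasBasePolynomials

variable {f g : ℂ[X]} (h : C.HasBasePolynomials f g)
include h

theorem left_ne_zero : f ≠ 0 := by
  rintro rfl
  exact C.ne_01 (eq_of_evalEval_eq fun x y ↦ by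
    rw [evalEval_zero]
    exact (h.p_zero_one x y).trans eval_zero)

theorem right_ne_zero : g ≠ 0 := by
  rintro rfl
  exact C.ne_m11 (eq_of_evalEval_eq fun x y ↦ by
    rw [evalEval_zero]
    exact (h.p_neg_one_one x y).trans eval_zero)

theorem p_one_neg_one (x y : ℂ) : C.p 1 (-1) x y = -g.eval x := by
  rw [C.p_skew, h.p_neg_one_one]

theorem p_one_zero (x y : ℂ) : C.p 1 0 x y = -f.eval (-y - x) := by
  rw [C.p_skew, h.p_zero_one]

theorem p_zero_neg_one (x y : ℂ) : C.p 0 (-1) x y = -f.eval y := by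
  obtain ⟨z, hz⟩ : ∃ z, g.eval z ≠ 0 := by
    by_contra! hg
    exact h.right_ne_zero (Polynomial.funext (by simpa using hg))
  have hjac := C.p_jacobi 0 (-1) 1 (ij := -1) (jk := 0) (ik := 1) rfl rfl rfl z y (-y - x)
  simp only [C.p_zero_zero, h.p_zero_one, h.p_neg_one_one, show -y - (-y - x) = x by ring] at hjac
  exact mul_right_cancel₀ hz (by linear_combination -hjac)

theorem reverse : C.reverse.HasBasePolynomials f g where
  p_zero_one x y := by rw [reverse_p, neg_zero, h.p_zero_neg_one, neg_neg]
  p_neg_one_one x y := by rw [reverse_p, neg_neg, h.p_one_neg_one, neg_neg]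

theorem rescale (c : ℤ → ℂˣ) : (C.rescale c).HasBasePolynomials (Polynomial.C (c 0 : ℂ) * f)
    (Polynomial.C (c 1 * c (-1) / c 0 : ℂ) * g) where
  p_zero_one x y := by
    rw [rescale_p, h.p_zero_one, zero_add, mul_div_cancel_right₀ _ (c 1).ne_zero, eval_C_mul]
  p_neg_one_one x y := by
    rw [rescale_p, h.p_neg_one_one, neg_add_cancel, eval_C_mul, mul_comm (c 1 : ℂ)]

theorem exists_rescale (a b : ℂˣ) : ∃ c,
    (C.rescale c).HasBasePolynomials (Polynomial.C (a : ℂ) * f) (Polynomial.C (b : ℂ) * g) :=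
  ⟨Function.update (Function.update 1 0 a) 1 (a * b), by
    simpa [Function.update] using h.rescale (Function.update (Function.update 1 0 a) 1 (a * b))⟩

theorem p_one_one_mul (x l m : ℂ) : C.p 1 1 (x + l) m * C.p (-1) 2 x l =
    g.eval (-(l + m)) * f.eval (l + m) - g.eval (x + m) * f.eval (-(x + m)) := by
  rw [C.p_jacobi (-1) 1 1 (ij := 0) (jk := 2) (ik := 0) rfl rfl rfl, h.p_neg_one_one, h.p_zero_one,
    h.p_neg_one_one, h.p_one_zero, show -l - m = -(l + m) by ring,
    show -m - x = -(x + m) by ring]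
  ring

end HasBasePolynomials

end ClassV

/-! ### Determination of structure polynomials up to scalars -/

theorem evalEval_map_compRingHom (p : ℂ[X][X]) (r : ℂ[X]) (x y : ℂ) :
    evalEval x y (p.map (compRingHom r)) = evalEval (r.eval x) y p := by
  simp [evalEval, eval_map, eval₂_eq_sum_range, eval_eq_sum_range (p := p), eval_finsetSum]

/-- Along the curves `m = u(x)` and `l = w(x)`, which `hu` and `hw` provide, `p` and `q` become
polynomials in one variable with constant product, hence constants. -/
theorem exists_units_of_evalEval_mul_eq {p q : ℂ[X][X]} {φ ψ : ℂ → ℂ → ℂ}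
    (h : ∀ x l m, evalEval (x + l) m p * evalEval x l q = φ (x + l) m * ψ x l)
    {u w : ℂ[X]} (hu : ∀ x, φ x (u.eval x) = 1) {δ : ℂ} (hδ : δ ≠ 0)
    (hw : ∀ x, ψ (x - w.eval x) (w.eval x) = δ) :
    ∃ k : ℂˣ, (∀ x m, evalEval x m p = k * φ x m) ∧ ∀ x l, evalEval x l q = (k : ℂ)⁻¹ * ψ x l := by
  have hprod : p.eval u * ((q.map (compRingHom (X - w))).eval w * C δ⁻¹) = 1 :=
    Polynomial.funext fun x ↦ by
      have hx := h (x - w.eval x) (w.eval x) (u.eval x)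
      rw [sub_add_cancel, hu, hw, one_mul] at hx
      rw [← mul_assoc, eval_mul, eval_mul, eval_eval_eq_evalEval, eval_eval_eq_evalEval,
        evalEval_map_compRingHom, eval_sub, eval_X, hx, eval_C, mul_inv_cancel₀ hδ, eval_one]
  obtain ⟨_, ⟨k, rfl⟩, hk⟩ := Polynomial.isUnit_iff.1 (IsUnit.of_mul_eq_one _ hprod)
  have hpu (x : ℂ) : evalEval x (u.eval x) p = k := by
    rw [← eval_eval_eq_evalEval, ← hk, eval_C]
  have hq (x l : ℂ) : evalEval x l q = (k : ℂ)⁻¹ * ψ x l := by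
    rw [eq_inv_mul_iff_mul_eq₀ k.ne_zero, ← hpu (x + l), h, hu, one_mul]
  refine ⟨k, fun x m ↦ mul_right_cancel₀ hδ ?_, hq⟩
  have hx := h (x - w.eval x) (w.eval x) m
  rw [sub_add_cancel, hq, hw] at hx
  linear_combination k * hx - evalEval x m p * δ * mul_inv_cancel₀ k.ne_zero

theorem exists_units_steps (k k' : ℤ → ℂˣ) : ∃ c : ℤ → ℂˣ, c 0 = 1 ∧ c 1 = 1 ∧ c (-1) = 1 ∧
    ∀ j, 1 ≤ j → c (j + 1) = c j * k j ∧ c (-(j + 1)) = c (-j) * k' j := by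
  refine ⟨fun i ↦ (∏ t ∈ Finset.Ico 1 i, k t) * ∏ t ∈ Finset.Ico 1 (-i), k' t, by simp, by simp,
    by simp, fun j hj ↦ ?_⟩
  have hneg {i : ℤ} (hi : i ≤ 1) : Finset.Ico 1 i = ∅ := Finset.Ico_eq_empty (by lia)
  simp only [neg_neg, hneg (show -j ≤ 1 by lia), hneg (show -(j + 1) ≤ 1 by lia),
    Finset.prod_empty, mul_one, ← Finset.insert_Ico_right_eq_Ico_add_one hj,
    Finset.prod_insert Finset.right_notMem_Ico, mul_comm, and_self]

namespace ClassV

variable {L : Type} [AddCommGroup L] [Module ℂ L] {C : ClassV L}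

variable (C) in
/-- `p_{1,j} = kⱼ Aⱼ` and `p_{-1,j+1} = kⱼ⁻¹ Bⱼ` for `j ≥ 1`: these structure polynomials are known
up to the scalars by which the bases of the `L_{j+1}` can still be changed. -/
def HasSteps (A B : ℤ → ℂ → ℂ → ℂ) (k : ℤ → ℂˣ) : Prop :=
  ∀ j, 1 ≤ j → (∀ x y, C.p 1 j x y = k j * A j x y) ∧
    ∀ x y, C.p (-1) (j + 1) x y = (k j : ℂ)⁻¹ * B j x y

namespace HasSteps

variable {A B : ℤ → ℂ → ℂ → ℂ} {k : ℤ → ℂˣ}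

theorem G_ne_bot (h : C.HasSteps A B k) (hA : ∀ j, 1 ≤ j → ∃ x y, A j x y ≠ 0) {i : ℤ}
    (hi : 1 ≤ i) : C.G i ≠ ⊥ := by
  obtain rfl | hi := hi.eq_or_lt
  · exact C.supp_one
  · obtain ⟨x, y, hxy⟩ := hA (i - 1) (by lia)
    intro hbot
    have hp := (h (i - 1) (by lia)).1 x y
    rw [RankOneContext.p_eq_zero_of_bot (.inr (.inr (by rwa [add_sub_cancel])))] at hp
    exact mul_ne_zero (k _).ne_zero hxy hp.symm

theorem rescale (h : C.HasSteps A B k) {c : ℤ → ℂˣ} (h1 : c 1 = 1) (hm1 : c (-1) = 1) {ε : ℂˣ}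
    (hc : ∀ j, 1 ≤ j → c (j + 1) = c j * (k j / ε)) :
    (C.rescale c).HasSteps A B fun _ ↦ ε := by
  refine fun j hj ↦ ⟨fun x y ↦ ?_, fun x y ↦ ?_⟩
  · rw [rescale_p, (h j hj).1, h1, add_comm 1 j, hc j hj]
    simp only [Units.val_one, one_mul, Units.val_mul, Units.val_div_eq_div_val]
    field_simp
  · rw [rescale_p, (h j hj).2, hm1, neg_add_cancel_comm_assoc, hc j hj]
    simp only [Units.val_one, Units.val_mul, Units.val_div_eq_div_val, one_mul]
    field_simp

theorem reverse_rescale (h : C.reverse.HasSteps A B k) {c : ℤ → ℂˣ} (h1 : c 1 = 1)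
    (hm1 : c (-1) = 1) {ε : ℂˣ} (hc : ∀ j, 1 ≤ j → c (-(j + 1)) = c (-j) * (k j / ε)) :
    (C.rescale c).reverse.HasSteps A B fun _ ↦ ε := by
  have hp (i j : ℤ) (x y : ℂ) :
      (C.rescale c).reverse.p i j x y = (C.reverse.rescale fun i ↦ c (-i)).p i j x y := by
    rw [rescale_p, reverse_p, reverse_p, rescale_p, ← neg_add, mul_neg]
  have hsteps := h.rescale (c := fun i ↦ c (-i)) hm1 (by rwa [neg_neg]) hc
  exact fun j hj ↦ by simpa only [hp] using hsteps j hj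

end HasSteps

end ClassV

/-! ### Degree sum two -/

namespace ClassV.HasBasePolynomials

variable {L : Type} [AddCommGroup L] [Module ℂ L] {C : ClassV L} {f g : ℂ[X]}

theorem exists_p_one_one (h : C.HasBasePolynomials f g) {α β γ : ℂ}
    (hF : ∀ x, g.eval (-x) * f.eval x = α * x ^ 2 + β * x + γ) (hαβ : α ≠ 0 ∨ β ≠ 0) :
    ∃ k : ℂˣ, (∀ x m, C.p 1 1 x m = k * (x + 2 * m)) ∧
      ∀ x l, C.p (-1) 2 x l = (k : ℂ)⁻¹ * (α * (l - x) + β) := by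
  obtain ⟨w, δ, hδ, hw⟩ : ∃ (w : ℂ[X]) (δ : ℂ), δ ≠ 0 ∧
      ∀ x, α * (w.eval x - (x - w.eval x)) + β = δ := by
    by_cases hα : α = 0
    · exact ⟨0, β, hαβ.resolve_left (not_not_intro hα), fun x ↦ by simp [hα]⟩
    · refine ⟨Polynomial.C (2 * α)⁻¹ * (Polynomial.C (1 - β) + Polynomial.C α * X), 1,
        one_ne_zero, fun x ↦ ?_⟩
      simp only [eval_mul, eval_C, eval_add, eval_X]
      field_simp
      ring
  refine exists_units_of_evalEval_mul_eq (φ := fun x m ↦ x + 2 * m) (fun x l m ↦ ?_)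
    (u := Polynomial.C (1 / 2) * (1 - X)) (fun x ↦ ?_) hδ hw
  · refine (h.p_one_one_mul x l m).trans ?_
    have hF' := hF (-(x + m))
    rw [neg_neg] at hF'
    rw [hF, hF']
    ring
  · simp

theorem p_zero_add_one (h : C.HasBasePolynomials f g) {j : ℤ} (hj : 1 + (j : ℂ) ≠ 0) {k : ℂˣ}
    {d : ℂ} (h1 : ∀ x y, C.p 1 j x y = k * (x + (1 + j) * y + d))
    (h0 : ∀ x y, C.p 0 j x y = j * f.eval y) (x y : ℂ) :
    C.p 0 (j + 1) x y = (j + 1 : ℂ) * f.eval y := by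
  -- The second argument of `p_{1,j}` is chosen such that `x + y + (1 + j)m + d = 1`.
  set m := (1 - d - x - y) / (1 + j : ℂ)
  have hm' : (1 + j) * m = 1 - d - x - y := mul_div_cancel₀ _ hj
  have hjac := C.p_jacobi 0 1 j (zero_add 1) (add_comm 1 j) (zero_add j) x y m
  rw [h.p_zero_one, h1, h1, h1, h0] at hjac
  refine mul_left_cancel₀ k.ne_zero ?_
  linear_combination hjac - k * C.p 0 (j + 1) x y * hm' + k * f.eval y * (1 + j) * hm'

/-- `p_{1,2}(0,m) p_{-1,3}(-l,l)` is a function of `m` times a function of `l`, and by the Jacobi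
identity also a polynomial with coefficients built from `α`, `β`, `γ`. -/
theorem nine_mul_mul_eq (h : C.HasBasePolynomials f g) {α β γ : ℂ}
    (hF : ∀ x, g.eval (-x) * f.eval x = α * x ^ 2 + β * x + γ) (hαβ : α ≠ 0 ∨ β ≠ 0) :
    9 * α * γ = 2 * β ^ 2 := by
  obtain ⟨k, h1, h2⟩ := h.exists_p_one_one hF hαβ
  have h02 (x y : ℂ) : C.p 0 2 x y = 2 * f.eval y := by
    have := h.p_zero_add_one (j := 1) (k := k) (d := 0) (by norm_num)
      (fun x y ↦ by rw [h1]; norm_num) (fun x y ↦ by rw [h.p_zero_one]; norm_num) x y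
    simpa [one_add_one_eq_two] using this
  have hmul (l m : ℂ) : C.p 1 2 0 m * C.p (-1) 3 (-l) l =
      9 * α * l * m + β * (l + 4 * m) + 2 * γ := by
    have hjac := C.p_jacobi (-1) 1 2 (ij := 0) (jk := 3) (ik := 1) rfl rfl rfl (-l) l m
    rw [neg_add_cancel, h.p_neg_one_one, h2, h1, h02] at hjac
    have hFlm := hF (l + m)
    rw [show -(l + m) = -l - m by ring] at hFlm
    linear_combination hjac + 2 * hFlm +
      (α * (l - (-l + m)) + β) * (-l + 2 * m) * inv_mul_cancel₀ k.ne_zero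
  have hswap : (C.p 1 2 0 0 * C.p (-1) 3 (-0) 0) * (C.p 1 2 0 1 * C.p (-1) 3 (-1) 1) =
      (C.p 1 2 0 1 * C.p (-1) 3 (-0) 0) * (C.p 1 2 0 0 * C.p (-1) 3 (-1) 1) := by ring
  rw [hmul, hmul, hmul, hmul] at hswap
  linear_combination hswap / 2

end ClassV.HasBasePolynomials

/-- The structure polynomials, evaluated at `∂ = x` and `λ = y`, which class `𝒱` algebras with
`p_{0,1} = f`, `p_{-1,1} = g` and `g(-x) f(x) = (x - s)(x - 2s)` have in a suitable basis. -/
def typeTwo (f g : ℂ[X]) (s : ℂ) (i j : ℤ) (x y : ℂ) : ℂ :=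
  if i + j = 0 then -i * g.eval x
  else if i = 0 then j * f.eval y
  else if j = 0 then -i * f.eval (-y - x)
  else i * x + (i + j) * y + s * (i - j)

section typeTwo

variable (f g : ℂ[X]) (s : ℂ) {i j : ℤ} (x y : ℂ)

theorem typeTwo_of_add_eq_zero (hij : i + j = 0) : typeTwo f g s i j x y = -i * g.eval x :=
  if_pos hij

theorem typeTwo_zero_left (hj : j ≠ 0) : typeTwo f g s 0 j x y = j * f.eval y := by
  simp [typeTwo, hj]

theorem typeTwo_zero_right (hi : i ≠ 0) (hj : j = 0) :
    typeTwo f g s i j x y = -i * f.eval (-y - x) := by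
  simp [typeTwo, hi, hj]

theorem typeTwo_of_ne_zero (hij : i + j ≠ 0) (hi : i ≠ 0) (hj : j ≠ 0) :
    typeTwo f g s i j x y = i * x + (i + j) * y + s * (i - j) := by
  simp [typeTwo, hij, hi, hj]

theorem neg_typeTwo_neg (i j : ℤ) : -typeTwo f g s (-i) (-j) x y = typeTwo f g s i j x y := by
  have hij : -i + -j = 0 ↔ i + j = 0 := by lia
  simp only [typeTwo, hij, neg_eq_zero]
  split_ifs <;> push_cast <;> ring

variable {f g s}

theorem typeTwo_jacobi (hF : ∀ x, g.eval (-x) * f.eval x = (x - s) * (x - 2 * s))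
    (hi : 1 ≤ i) (j : ℤ) (x l m : ℂ) :
    typeTwo f g s i j (x + l) m * typeTwo f g s 1 (i + j) x l =
      typeTwo f g s 1 i (-l - m) l * typeTwo f g s (1 + i) j x (l + m) +
        typeTwo f g s 1 j (x + m) l * typeTwo f g s i (1 + j) x m := by
  have hgf (u v : ℂ) (huv : -v = u) : g.eval u * f.eval v = (v - s) * (v - 2 * s) := huv ▸ hF v
  by_cases hij : i + j = -1
  · simp (disch := lia) only [typeTwo_of_ne_zero, typeTwo_of_add_eq_zero]
    obtain rfl : j = -1 - i := by lia
    push_cast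
    ring
  by_cases hj : j = 0
  · subst hj
    simp (disch := lia) only [typeTwo_of_ne_zero, typeTwo_zero_right]
    rw [show -m - (x + l) = -(l + m) - x by ring, show -l - (x + m) = -(l + m) - x by ring]
    push_cast
    ring
  by_cases hj' : j = -1
  · subst hj'
    have hm := hgf (x + m) (-m - x) (by ring)
    by_cases hi' : i = 1
    · subst hi'
      simp (disch := lia) only [typeTwo_of_ne_zero, typeTwo_of_add_eq_zero, typeTwo_zero_right]
      push_cast
      linear_combination hgf (x + l) (-l - x) (by ring) - hm
    · simp (disch := lia) only [typeTwo_of_ne_zero, typeTwo_of_add_eq_zero, typeTwo_zero_right]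
      push_cast
      linear_combination -i * hm
  by_cases hij' : i + j = 0
  · simp (disch := lia) only [typeTwo_of_ne_zero, typeTwo_of_add_eq_zero, typeTwo_zero_right]
    obtain rfl : j = -i := by lia
    push_cast
    linear_combination i * hgf (x + l) (-l - x) (by ring)
  · simp (disch := lia) only [typeTwo_of_ne_zero]
    push_cast
    ring

theorem exists_typeTwo_one_ne_zero (hj : 1 ≤ j) : ∃ x y, typeTwo f g s 1 j x y ≠ 0 :=
  ⟨1 - s * (1 - j), 0, by simp (disch := lia) [typeTwo_of_ne_zero]⟩

end typeTwo

namespace ClassV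

variable {L : Type} [AddCommGroup L] [Module ℂ L] {C : ClassV L} {f g : ℂ[X]} {s : ℂ}

theorem p_eq_typeTwo_of_pos (hF : ∀ x, g.eval (-x) * f.eval x = (x - s) * (x - 2 * s))
    (h1 : ∀ j x y, C.p 1 j x y = typeTwo f g s 1 j x y) {i : ℤ} (hi : 1 ≤ i) :
    ∀ j x y, C.p i j x y = typeTwo f g s i j x y := by
  induction i, hi using Int.leInduction with
  | base => exact h1
  | succ i hi ih =>
    intro j x y
    -- With this `l` the factor `p_{1,i}(-y, l)` of the Jacobi identity is equal to `1`.
    have hi1 : 1 + (i : ℂ) ≠ 0 := by norm_cast; lia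
    set l := (1 + y - s * (1 - i)) / (1 + i : ℂ)
    have hl : (1 + i) * l = 1 + y - s * (1 - i) := mul_div_cancel₀ _ hi1
    have hfac : typeTwo f g s 1 i (-l - (y - l)) l = 1 := by
      rw [typeTwo_of_ne_zero f g s _ _ (by lia) one_ne_zero (by lia)]
      push_cast
      linear_combination hl
    have hjac := C.p_jacobi 1 i j rfl rfl rfl x l (y - l)
    simp only [h1, ih] at hjac
    rw [typeTwo_jacobi hF hi, hfac, add_sub_cancel, one_mul, one_mul] at hjac
    rw [add_comm i 1]
    exact (add_right_cancel hjac).symm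

namespace HasBasePolynomials

theorem exists_p_one_typeTwo (h : C.HasBasePolynomials f g)
    (hF : ∀ x, g.eval (-x) * f.eval x = (x - s) * (x - 2 * s)) {j : ℤ} (hj : 1 ≤ j) :
    (∀ x y, C.p 0 j x y = j * f.eval y) ∧ ∃ k : ℂˣ,
      (∀ x y, C.p 1 j x y = k * typeTwo f g s 1 j x y) ∧
        ∀ x y, C.p (-1) (j + 1) x y = (k : ℂ)⁻¹ * typeTwo f g s (-1) (j + 1) x y := by
  induction j, hj using Int.leInduction with
  | base =>
    obtain ⟨k, h1, h2⟩ := h.exists_p_one_one (α := 1) (β := -3 * s) (γ := 2 * s ^ 2)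
      (fun x ↦ by rw [hF]; ring) (.inl one_ne_zero)
    refine ⟨fun x y ↦ by simp [h.p_zero_one], k, fun x y ↦ ?_, fun x y ↦ ?_⟩
    · simp (disch := lia) only [h1, typeTwo_of_ne_zero]
      push_cast
      ring
    · simp (disch := lia) only [one_add_one_eq_two, h2, typeTwo_of_ne_zero]
      push_cast
      ring
  | succ j hj ih =>
    obtain ⟨h0, k, h1, h2⟩ := ih
    simp (disch := lia) only [typeTwo_of_ne_zero] at h1 h2 ⊢
    have hj1 : 1 + (j : ℂ) ≠ 0 := by norm_cast; lia
    have hj2 : 2 + (j : ℂ) ≠ 0 := by norm_cast; lia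
    have h0' := h.p_zero_add_one hj1 (d := s * (1 - j)) (fun x y ↦ by rw [h1]; push_cast; ring) h0
    refine ⟨by exact_mod_cast h0', exists_units_of_evalEval_mul_eq ?_
      (u := Polynomial.C (2 + j : ℂ)⁻¹ * (1 - X + Polynomial.C (s * j))) ?_ one_ne_zero
      (w := Polynomial.C (2 + j : ℂ)⁻¹ * (1 + X + Polynomial.C (s * (j + 3)))) ?_⟩
    · intro x l m
      refine (C.p_jacobi (-1) 1 (j + 1) (ij := 0) (jk := j + 1 + 1) (ik := j) rfl (by ring)
        (by ring) x l m).trans ?_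
      rw [h.p_neg_one_one, h2, h1, h0']
      have hlm := hF (l + m)
      rw [show -(l + m) = -l - m by ring] at hlm
      push_cast
      linear_combination (j + 1) * hlm + (-(x + m) + j * l - s * (j + 2)) *
        (x + (1 + j) * m + s * (1 - j)) * inv_mul_cancel₀ k.ne_zero
    all_goals
      intro x
      simp only [eval_mul, eval_C, eval_add, eval_sub, eval_one, eval_X]
      field_simp
      push_cast
      ring

theorem p_zero_left_eq_typeTwo (h : C.HasBasePolynomials f g)
    (hF : ∀ x, g.eval (-x) * f.eval x = (x - s) * (x - 2 * s)) (j : ℤ) (x y : ℂ) :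
    C.p 0 j x y = typeTwo f g s 0 j x y := by
  obtain hj | rfl | hj := lt_trichotomy j 0
  · rw [← neg_typeTwo_neg, neg_zero, typeTwo_zero_left f g s x y (by lia),
      ← (h.reverse.exists_p_one_typeTwo hF (by lia)).1 x y, reverse_p, neg_neg, neg_neg, neg_zero]
  · simp [C.p_zero_zero, typeTwo]
  · rw [(h.exists_p_one_typeTwo hF hj).1, typeTwo_zero_left f g s x y hj.ne']

theorem p_one_left_eq_typeTwo (h : C.HasBasePolynomials f g)
    (hpos : C.HasSteps (typeTwo f g s 1) (fun j ↦ typeTwo f g s (-1) (j + 1)) fun _ ↦ 1)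
    (hneg : C.reverse.HasSteps (typeTwo f g s 1) (fun j ↦ typeTwo f g s (-1) (j + 1)) fun _ ↦ 1)
    (j : ℤ) (x y : ℂ) : C.p 1 j x y = typeTwo f g s 1 j x y := by
  obtain hj | rfl | rfl | hj : j + 1 < 0 ∨ j = -1 ∨ j = 0 ∨ 1 ≤ j := by lia
  · have hrev := (hneg (-j - 1) (by lia)).2 x y
    rw [reverse_p, sub_add_cancel, neg_neg, neg_neg] at hrev
    rw [← neg_typeTwo_neg]
    simpa [eq_neg_iff_add_eq_zero, neg_eq_iff_add_eq_zero] using hrev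
  · rw [h.p_one_neg_one, typeTwo_of_add_eq_zero f g s x y (by lia), Int.cast_one, neg_one_mul]
  · rw [h.p_one_zero, typeTwo_zero_right f g s x y one_ne_zero rfl, Int.cast_one, neg_one_mul]
  · simpa using (hpos j hj).1 x y

theorem p_eq_typeTwo (h : C.HasBasePolynomials f g)
    (hF : ∀ x, g.eval (-x) * f.eval x = (x - s) * (x - 2 * s))
    (hpos : C.HasSteps (typeTwo f g s 1) (fun j ↦ typeTwo f g s (-1) (j + 1)) fun _ ↦ 1)
    (hneg : C.reverse.HasSteps (typeTwo f g s 1) (fun j ↦ typeTwo f g s (-1) (j + 1)) fun _ ↦ 1)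
    (i j : ℤ) (x y : ℂ) : C.p i j x y = typeTwo f g s i j x y := by
  have hpos' : C.reverse.reverse.HasSteps (typeTwo f g s 1)
      (fun j ↦ typeTwo f g s (-1) (j + 1)) fun _ ↦ 1 := by
    simpa only [HasSteps, reverse_p, neg_neg] using hpos
  obtain hi | rfl | hi := lt_trichotomy i 0
  · have hrev := p_eq_typeTwo_of_pos hF (h.reverse.p_one_left_eq_typeTwo hneg hpos')
      (show 1 ≤ -i by lia) (-j) x y
    rwa [reverse_p, neg_neg, neg_neg, ← neg_typeTwo_neg, neg_neg, neg_neg, neg_inj] at hrev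
  · exact h.p_zero_left_eq_typeTwo hF j x y
  · exact p_eq_typeTwo_of_pos hF (h.p_one_left_eq_typeTwo hpos hneg) hi j x y

theorem exists_hasSteps_typeTwo (h : C.HasBasePolynomials f g)
    (hF : ∀ x, g.eval (-x) * f.eval x = (x - s) * (x - 2 * s)) :
    ∃ k, C.HasSteps (typeTwo f g s 1) (fun j ↦ typeTwo f g s (-1) (j + 1)) k := by
  choose! k hk using fun j hj ↦ (h.exists_p_one_typeTwo hF (j := j) hj).2
  exact ⟨k, hk⟩

theorem G_ne_bot_of_quadratic (h : C.HasBasePolynomials f g)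
    (hF : ∀ x, g.eval (-x) * f.eval x = (x - s) * (x - 2 * s)) (i : ℤ) : C.G i ≠ ⊥ := by
  obtain ⟨k, hk⟩ := h.exists_hasSteps_typeTwo hF
  obtain ⟨k', hk'⟩ := h.reverse.exists_hasSteps_typeTwo hF
  obtain hi | rfl | hi := lt_trichotomy i 0
  · have hG : C.G (- -i) ≠ ⊥ :=
      hk'.G_ne_bot (fun _ ↦ exists_typeTwo_one_ne_zero) (show 1 ≤ -i by lia)
    rwa [neg_neg] at hG
  · exact C.supp_zero
  · exact hk.G_ne_bot (fun _ ↦ exists_typeTwo_one_ne_zero) hi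

theorem exists_rescale_p_eq_typeTwo (h : C.HasBasePolynomials f g)
    (hF : ∀ x, g.eval (-x) * f.eval x = (x - s) * (x - 2 * s)) :
    ∃ c, ∀ i j x y, (C.rescale c).p i j x y = typeTwo f g s i j x y := by
  obtain ⟨k, hk⟩ := h.exists_hasSteps_typeTwo hF
  obtain ⟨k', hk'⟩ := h.reverse.exists_hasSteps_typeTwo hF
  obtain ⟨c, h0, h1, hm1, hc⟩ := exists_units_steps k k'
  refine ⟨c, p_eq_typeTwo (by simpa [h0, h1, hm1] using h.rescale c) hF
    (hk.rescale h1 hm1 fun j hj ↦ ?_) (hk'.reverse_rescale h1 hm1 fun j hj ↦ ?_)⟩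
  · rw [div_one, (hc j hj).1]
  · rw [div_one, (hc j hj).2]

end HasBasePolynomials

end ClassV

/-! ### The algebras of type II -/

section Models

variable (s : ℂ) (i j : ℤ) (x y : ℂ)

theorem typeTwo_eq_pECL : typeTwo (-1) (-((X + Polynomial.C s) * (X + Polynomial.C (2 * s)))) s
    i j x y = evalEval x y (pECL s i j) := by
  unfold typeTwo pECL
  split_ifs <;> simp only [map_mul, eval_neg, eval_one, eval_mul, eval_add, eval_X, eval_C,
    evalEval_add, evalEval_mul, evalEval_Pc, evalEval_Pd, evalEval_Pl] <;> ring

theorem typeTwo_eq_pCL3 : typeTwo (X - Polynomial.C (2 * s)) (-(X + Polynomial.C s)) s i j x y =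
    evalEval x y (pCL3 s i j) := by
  unfold typeTwo pCL3
  split_ifs <;> simp only [map_mul, eval_neg, eval_add, eval_sub, eval_mul, eval_X, eval_C,
    evalEval_add, evalEval_sub, evalEval_mul, evalEval_Pc, evalEval_Pd, evalEval_Pl] <;> ring

theorem typeTwo_eq_pCL2 : typeTwo (X - Polynomial.C s) (-(X + Polynomial.C (2 * s))) s i j x y =
    evalEval x y (pCL2 0 s i j) := by
  unfold typeTwo pCL2
  split_ifs with hij hi hj
  · obtain rfl : j = -i := by lia
    simp only [map_mul, eval_neg, eval_add, eval_mul, eval_X, eval_C, evalEval_add, evalEval_mul,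
      evalEval_Pc, evalEval_Pd, evalEval_Pl, Int.cast_neg]
    ring
  · simp only [hi, eval_sub, eval_X, eval_C, evalEval_add, evalEval_mul, evalEval_Pc, evalEval_Pd,
      evalEval_Pl, Int.cast_zero]
    ring
  · simp only [hj, eval_sub, eval_X, eval_C, evalEval_add, evalEval_mul, evalEval_Pc, evalEval_Pd,
      evalEval_Pl, Int.cast_zero]
    ring
  · simp

theorem typeTwo_eq_pSCL2 : typeTwo (-((X - Polynomial.C s) * (X - Polynomial.C (2 * s)))) (-1) s
    i j x y = evalEval x y (pSCL2 0 s i j) := by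
  have hij : (i : ℂ) + j = 0 ↔ i + j = 0 := by norm_cast
  simp only [typeTwo, pSCL2, pCL2, mul_zero, neg_zero, add_zero, Int.cast_eq_zero, hij]
  obtain rfl | hi := eq_or_ne i 0
  · obtain rfl | hj := eq_or_ne j 0
    · simp
    · simp only [zero_add, hj, ↓reduceIte, map_mul, eval_neg, eval_mul, eval_sub, eval_X, eval_C,
        mul_neg, mul_one, Int.cast_zero, evalEval_add, evalEval_sub, evalEval_mul, evalEval_Pc,
        evalEval_Pd, evalEval_Pl]
      ring
  · obtain rfl | hj := eq_or_ne j 0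
    · simp only [add_zero, hi, ↓reduceIte, map_mul, eval_neg, eval_mul, eval_sub, eval_X, eval_C,
        mul_neg, neg_mul, one_mul, Int.cast_zero, evalEval_add, evalEval_mul, evalEval_Pc,
        evalEval_Pd, evalEval_Pl]
      ring
    · split_ifs <;> simp

end Models

theorem associated_of_dvd_X_sub_C_mul_X_sub_C {K : Type*} [Field K] {f : K[X]} {a b : K}
    (hf : f ∣ (X - Polynomial.C a) * (X - Polynomial.C b)) :
    Associated f 1 ∨ Associated f (X - Polynomial.C a) ∨ Associated f (X - Polynomial.C b) ∨
      Associated f ((X - Polynomial.C a) * (X - Polynomial.C b)) := by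
  obtain ⟨f₁, f₂, h₁, h₂, rfl⟩ := exists_dvd_and_dvd_of_dvd_mul hf
  rw [(irreducible_X_sub_C _).dvd_iff, ← associated_one_iff_isUnit] at h₁ h₂
  obtain h₁ | h₁ := h₁ <;> obtain h₂ | h₂ := h₂
  · exact .inl (by simpa using h₁.mul_mul h₂)
  · exact .inr (.inr (.inl (by simpa using h₁.mul_mul h₂.symm)))
  · exact .inr (.inl (by simpa using h₁.symm.mul_mul h₂))
  · exact .inr (.inr (.inr (h₁.symm.mul_mul h₂.symm)))

namespace ClassV.HasBasePolynomials

variable {L : Type} [AddCommGroup L] [Module ℂ L] {C : ClassV L} {f g f' g' : ℂ[X]} {α s : ℂ}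

theorem exists_basis_of_typeTwo (h : C.HasBasePolynomials f g) (hα : α ≠ 0)
    (hF : ∀ x, g.eval (-x) * f.eval x = α * ((x - s) * (x - 2 * s))) (hf : Associated f f')
    (hF' : ∀ x, g'.eval (-x) * f'.eval x = (x - s) * (x - 2 * s)) {q : ℤ → ℤ → ℂ[X][X]}
    (hq : ∀ i j x y, typeTwo f' g' s i j x y = evalEval x y (q i j)) :
    ∃ v : ℤ → L, C.IsFreePolyBasis v ∧
      ∀ i j, C.BracketEq (v i) (v j) (v (i + j)) (q i j) := by
  obtain ⟨u, hu⟩ := hf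
  obtain ⟨t, ht, htu⟩ := isUnit_iff.1 u.isUnit
  obtain rfl : Polynomial.C t * f = f' := by rw [htu, mul_comm, hu]
  lift t to ℂˣ using ht
  lift α to ℂˣ using hα.isUnit
  obtain rfl : Polynomial.C (((α * t)⁻¹ : ℂˣ) : ℂ) * g = g' := by
    refine mul_right_cancel₀ (b := f.comp (-X)) ?_ (Polynomial.funext fun x ↦ ?_)
    · simpa using h.left_ne_zero
    · have hx := hF (-x)
      have hx' := hF' (-x)
      simp only [neg_neg, eval_mul, eval_C] at hx hx'
      simp only [eval_mul, eval_C, eval_comp, eval_neg, eval_X, Units.val_inv_eq_inv_val,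
        Units.val_mul]
      field_simp
      linear_combination hx - α * hx'
  obtain ⟨c, hc⟩ := h.exists_rescale t (α * t)⁻¹
  obtain ⟨c', hp⟩ := hc.exists_rescale_p_eq_typeTwo hF'
  exact ((C.rescale c).rescale c').exists_basis_of_p_eq (hc.G_ne_bot_of_quadratic hF')
    fun i j x y ↦ (hp i j x y).trans (hq i j x y)

theorem isECL_or_isSCL2_or_isCL2_or_isCL3 (h : C.HasBasePolynomials f g) (hα : α ≠ 0)
    (hF : ∀ x, g.eval (-x) * f.eval x = α * ((x - s) * (x - 2 * s))) :
    C.IsECL s ∨ C.IsSCL2 0 s ∨ C.IsCL2 0 s ∨ C.IsCL3 s := by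
  have hdvd : f ∣ (X - Polynomial.C s) * (X - Polynomial.C (2 * s)) := by
    refine ⟨Polynomial.C α⁻¹ * g.comp (-X), Polynomial.funext fun x ↦ ?_⟩
    simp only [eval_mul, eval_sub, eval_X, eval_C, eval_comp, eval_neg]
    rw [mul_left_comm, mul_comm (f.eval x), hF, inv_mul_cancel_left₀ hα]
  obtain hf | hf | hf | hf := associated_of_dvd_X_sub_C_mul_X_sub_C hdvd
  · refine .inl (h.exists_basis_of_typeTwo hα hF hf.neg_right (fun x ↦ ?_) (typeTwo_eq_pECL s))
    simp only [eval_neg, eval_mul, eval_add, eval_X, eval_C, eval_one]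
    ring
  · refine .inr (.inr (.inl
      (h.exists_basis_of_typeTwo hα hF hf (fun x ↦ ?_) (typeTwo_eq_pCL2 s))))
    simp only [eval_neg, eval_add, eval_sub, eval_X, eval_C]
    ring
  · refine .inr (.inr (.inr
      (h.exists_basis_of_typeTwo hα hF hf (fun x ↦ ?_) (typeTwo_eq_pCL3 s))))
    simp only [eval_neg, eval_add, eval_sub, eval_X, eval_C]
    ring
  · refine .inr (.inl
      (h.exists_basis_of_typeTwo hα hF hf.neg_right (fun x ↦ ?_) (typeTwo_eq_pSCL2 s)))
    simp

theorem natDegree_comp_neg_X_mul (h : C.HasBasePolynomials f g) :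
    (g.comp (-X) * f).natDegree = g.natDegree + f.natDegree := by
  rw [natDegree_mul (comp_neg_X_eq_zero_iff.not.2 h.right_ne_zero) h.left_ne_zero, natDegree_comp,
    natDegree_neg, natDegree_X, mul_one]

theorem eval_neg_mul_eval (h : C.HasBasePolynomials f g) (hd : g.natDegree + f.natDegree ≤ 2)
    (x : ℂ) : g.eval (-x) * f.eval x = (g.comp (-X) * f).coeff 2 * x ^ 2 +
      (g.comp (-X) * f).coeff 1 * x + (g.comp (-X) * f).coeff 0 := by
  rw [← h.natDegree_comp_neg_X_mul] at hd
  have hF := congrArg (eval x) (eq_quadratic_of_degree_le_two (natDegree_le_iff_degree_le.1 hd))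
  simpa only [eval_mul, eval_add, eval_comp, eval_neg, eval_X, eval_C, eval_pow] using hF

theorem natDegree_add_natDegree_ne_one (h : C.HasBasePolynomials f g) :
    g.natDegree + f.natDegree ≠ 1 := by
  intro hd
  have hF := h.natDegree_comp_neg_X_mul.trans hd
  have h1 : (g.comp (-X) * f).coeff 1 ≠ 0 := coeff_ne_zero_of_eq_degree
    (degree_eq_iff_natDegree_eq_of_pos one_pos |>.2 hF)
  have h2 : (g.comp (-X) * f).coeff 2 = 0 := coeff_eq_zero_of_natDegree_lt (by lia)
  have hrel := h.nine_mul_mul_eq (h.eval_neg_mul_eval (by lia)) (.inr h1)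
  rw [h2, mul_zero, zero_mul, zero_eq_mul] at hrel
  exact h1 (eq_zero_of_pow_eq_zero (hrel.resolve_left two_ne_zero))

theorem exists_isECL_or_isSCL2_or_isCL2_or_isCL3 (h : C.HasBasePolynomials f g)
    (hd : g.natDegree + f.natDegree = 2) :
    ∃ s, C.IsECL s ∨ C.IsSCL2 0 s ∨ C.IsCL2 0 s ∨ C.IsCL3 s := by
  have hF := h.eval_neg_mul_eval hd.le
  have hα : (g.comp (-X) * f).coeff 2 ≠ 0 := coeff_ne_zero_of_eq_degree
    (degree_eq_iff_natDegree_eq_of_pos two_pos |>.2 (h.natDegree_comp_neg_X_mul.trans hd))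
  set α := (g.comp (-X) * f).coeff 2
  set β := (g.comp (-X) * f).coeff 1
  set γ := (g.comp (-X) * f).coeff 0
  refine ⟨-β / (3 * α), h.isECL_or_isSCL2_or_isCL2_or_isCL3 hα fun x ↦ ?_⟩
  rw [hF]
  field_simp
  linear_combination h.nine_mul_mul_eq hF (.inl hα)

end ClassV.HasBasePolynomials

/-! ### Degree sum zero -/

theorem eval_eq_mul_eval_one_of_add {K : Type*} [Field K] [CharZero K] {r : K[X]}
    (hr : ∀ x y, r.eval (x + y) = r.eval x + r.eval y) (x : K) : r.eval x = r.eval 1 * x := by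
  have heq : r = Polynomial.C (r.eval 1) * X := by
    refine eq_of_infinite_eval_eq _ _
      ((Set.infinite_range_of_injective (Nat.cast_injective (R := K))).mono ?_)
    rintro _ ⟨n, rfl⟩
    simpa [mul_comm (eval 1 r)] using
      map_nsmul (AddMonoidHom.mk' (fun x ↦ r.eval x) hr) n 1
  simpa using congrArg (eval x) heq

theorem coeff_taylor_of_natDegree_le {R : Type*} [CommSemiring R] {p : R[X]} {n : ℕ}
    (hn : p.natDegree ≤ n) (r : R) : (taylor r p).coeff n = p.coeff n := by
  obtain rfl | hn := hn.eq_or_lt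
  · rw [coeff_taylor_natDegree, coeff_natDegree]
  · rw [coeff_eq_zero_of_natDegree_lt hn,
      coeff_eq_zero_of_natDegree_lt (by rwa [natDegree_taylor])]

/-- Comparison of the leading coefficients in `m` reduces `h` to the equation
`q(x + l) r(x, l) = (a + b) q(x)`, which forces `q` to be constant. -/
theorem evalEval_eq_add_of_mul_eq {p r : ℂ[X][X]} (hp : p ≠ 0) {a b : ℂ} (hab : a + b ≠ 0)
    (h : ∀ x l m, evalEval (x + l) m p * evalEval x l r =
      a * evalEval x (l + m) p + b * evalEval x m p) (x l : ℂ) : evalEval x l r = a + b := by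
  have hlead (x l : ℂ) : p.leadingCoeff.eval (x + l) * evalEval x l r =
      (a + b) * p.leadingCoeff.eval x := by
    have hpoly : p.map (evalRingHom (x + l)) * Polynomial.C (evalEval x l r) =
        Polynomial.C a * taylor l (p.map (evalRingHom x)) +
          Polynomial.C b * p.map (evalRingHom x) :=
      Polynomial.funext fun m ↦ by
        simpa [taylor_eval, map_evalRingHom_eval, add_comm m l] using h x l m
    have hcoeff := congrArg (coeff · p.natDegree) hpoly
    simp only [coeff_mul_C, coeff_add, coeff_C_mul,
      coeff_taylor_of_natDegree_le natDegree_map_le, coeff_map, coe_evalRingHom,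
      coeff_natDegree] at hcoeff
    rw [hcoeff, add_mul]
  obtain ⟨x₀, hx₀⟩ : ∃ x₀, p.leadingCoeff.eval x₀ ≠ 0 := by
    contrapose! hp
    exact leadingCoeff_eq_zero.1 (Polynomial.funext fun x ↦ by rw [hp, eval_zero])
  obtain ⟨k, hk, hr⟩ := exists_units_of_evalEval_mul_eq (p := Polynomial.C p.leadingCoeff) (q := r)
    (φ := fun _ _ ↦ 1) (ψ := fun x _ ↦ (a + b) * p.leadingCoeff.eval x)
    (u := 0) (w := X - Polynomial.C x₀) (δ := (a + b) * p.leadingCoeff.eval x₀)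
    (fun x l m ↦ by simpa [evalEval] using hlead x l) (fun _ ↦ rfl) (mul_ne_zero hab hx₀)
    (fun x ↦ by simp)
  have hkx : p.leadingCoeff.eval x = k := by simpa [evalEval] using hk x 0
  rw [hr, hkx, mul_comm, mul_assoc, mul_inv_cancel₀ k.ne_zero, mul_one]

/-- The structure polynomials `p_{1,j}`, `j ≥ 1`, evaluated at `∂ = x` and `λ = y`, of a suitably
normalized class `𝒱` algebra with `p_{0,1} = p_{-1,1} = -1` and `L₂ ≠ 0`. -/
def typeOneUp (j : ℤ) (x y : ℂ) : ℂ := if j = 1 then x + 2 * y else 1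

/-- The constant structure polynomials `p_{-1,j+1}`, `j ≥ 1`, that accompany `typeOneUp`. -/
def typeOneDown (j : ℤ) (_ _ : ℂ) : ℂ := (j + 2) * (j - 1) / 2

theorem typeOneUp_of_ne_one {j : ℤ} (hj : j ≠ 1) (x y : ℂ) : typeOneUp j x y = 1 := if_neg hj

theorem exists_typeOneUp_ne_zero (j : ℤ) : ∃ x y, typeOneUp j x y ≠ 0 :=
  ⟨1, 0, by simp [typeOneUp]⟩

namespace ClassV

variable {L : Type} [AddCommGroup L] [Module ℂ L] {C : ClassV L}

theorem sp_one_one_ne_zero (h2 : C.G 2 ≠ ⊥) : C.sp 1 1 ≠ 0 :=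
  fun h ↦ h2 (G_eq_bot_of_sp_one_one_eq_zero h le_rfl)

namespace HasBasePolynomials

theorem p_zero_two (h : C.HasBasePolynomials (-1) (-1)) (h2 : C.G 2 ≠ ⊥) (x y : ℂ) :
    C.p 0 2 x y = -2 := by
  have hadd : (-1 : ℂ) + -1 = -2 := by norm_num
  rw [← hadd]
  refine evalEval_eq_add_of_mul_eq (sp_one_one_ne_zero h2) (by norm_num) (fun x l m ↦ ?_) x y
  have hjac := C.p_jacobi 0 1 1 (ij := 1) (jk := 2) (ik := 1) rfl rfl rfl x l m
  simp only [h.p_zero_one, eval_neg, eval_one] at hjac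
  exact hjac

theorem exists_p_one_one_eq (h : C.HasBasePolynomials (-1) (-1)) (h2 : C.G 2 ≠ ⊥) :
    ∃ k : ℂˣ, ∀ x y, C.p 1 1 x y = k * (x + 2 * y) := by
  have hmid (x l m : ℂ) : 2 * C.p 1 1 (x + l) m = C.p 1 1 x (l + m) + C.p 1 1 x m := by
    have hjac := C.p_jacobi 0 1 1 (ij := 1) (jk := 2) (ik := 1) rfl rfl rfl x l m
    rw [h.p_zero_two h2] at hjac
    simp only [h.p_zero_one, eval_neg, eval_one] at hjac
    linear_combination -hjac
  set r := (C.sp 1 1).map (evalRingHom 0)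
  have hr (y : ℂ) : C.p 1 1 0 y = r.eval y := (map_evalRingHom_eval 0 y _).symm
  have hp (x y : ℂ) : 2 * C.p 1 1 x y = r.eval (x + y) + r.eval y := by
    simpa only [zero_add, hr] using hmid 0 x y
  have hr0 : r.eval 0 = 0 := by
    have hskew := C.p_skew 1 1 0 0
    rw [neg_zero, sub_zero, hr] at hskew
    exact self_eq_neg.1 hskew
  have hlin := eval_eq_mul_eval_one_of_add (r := r) fun x y ↦ by
    have hxy := hmid x y 0
    have h1 := hp (x + y) 0
    have h2 := hp x y
    have h3 := hp x 0
    simp only [add_zero, hr0] at hxy h1 h3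
    linear_combination 2 * hxy - 2 * h1 + h2 + h3
  have h11 (x y : ℂ) : C.p 1 1 x y = r.eval 1 / 2 * (x + 2 * y) := by
    linear_combination hp x y / 2 + hlin (x + y) / 2 + hlin y / 2
  have hk : r.eval 1 / 2 ≠ 0 := fun hk ↦ sp_one_one_ne_zero h2 <| eq_of_evalEval_eq fun x y ↦
    (h11 x y).trans (by rw [hk, zero_mul, evalEval_zero])
  exact ⟨.mk0 _ hk, h11⟩

theorem p_neg_one_two (h : C.HasBasePolynomials (-1) (-1)) (h2 : C.G 2 ≠ ⊥) (x y : ℂ) :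
    C.p (-1) 2 x y = 0 := by
  obtain ⟨k, hk⟩ := h.exists_p_one_one_eq h2
  -- With this `m` the factor `p_{1,1}(x + y, m)` is equal to `k`.
  have hmul := h.p_one_one_mul x y ((1 - x - y) / 2)
  rw [hk] at hmul
  simp only [eval_neg, eval_one] at hmul
  refine (mul_eq_zero.1 (?_ : (k : ℂ) * C.p (-1) 2 x y = 0)).resolve_left k.ne_zero
  linear_combination hmul

theorem p_zero_add_two {j : ℤ} {k : ℂˣ} (h : C.HasBasePolynomials (-1) (-1))
    (h0 : ∀ x y, C.p 0 (j + 1) x y = -(j + 1)) (h1 : ∀ x y, C.p 1 (j + 1) x y = k) (x y : ℂ) :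
    C.p 0 (j + 1 + 1) x y = -(j + 2) := by
  have hjac := C.p_jacobi 0 1 (j + 1) (ij := 1) (jk := j + 1 + 1) (ik := j + 1) rfl (by ring)
    (by ring) x y 0
  simp only [h1, h0, h.p_zero_one, eval_neg, eval_one] at hjac
  apply mul_left_cancel₀ k.ne_zero
  linear_combination hjac

theorem exists_p_one_typeOne_succ {j : ℤ} {k : ℂˣ} (h : C.HasBasePolynomials (-1) (-1))
    (hj : 1 ≤ j) (h0 : ∀ x y, C.p 0 (j + 1) x y = -(j + 1))
    (h1 : ∀ x y, C.p 1 j x y = k * typeOneUp j x y)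
    (hm1 : ∀ x y, C.p (-1) (j + 1) x y = (k : ℂ)⁻¹ * typeOneDown j x y) : ∃ k' : ℂˣ,
      (∀ x y, C.p 1 (j + 1) x y = k' * typeOneUp (j + 1) x y) ∧
        ∀ x y, C.p (-1) (j + 1 + 1) x y = (k' : ℂ)⁻¹ * typeOneDown (j + 1) x y := by
  have hup (x y : ℂ) : ((j : ℂ) - 1) * typeOneUp j x y = j - 1 := by
    obtain rfl | hj1 := eq_or_ne j 1
    · simp
    · rw [typeOneUp_of_ne_one hj1, mul_one]
  have hδ : (j + 3 : ℂ) * j / 2 ≠ 0 := by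
    have hj' : (j + 3) * j ≠ 0 := mul_ne_zero (by lia) (by lia)
    exact div_ne_zero (by exact_mod_cast hj') two_ne_zero
  refine exists_units_of_evalEval_mul_eq (u := 0) (w := 0) (fun x l m ↦ ?_)
    (fun x ↦ typeOneUp_of_ne_one (by lia) _ _) hδ fun x ↦ ?_
  · refine (C.p_jacobi (-1) 1 (j + 1) (ij := 0) (jk := j + 1 + 1) (ik := j) rfl (by ring)
      (by ring) x l m).trans ?_
    simp only [h.p_neg_one_one, hm1, h1, h0, typeOneDown, eval_neg, eval_one,
      typeOneUp_of_ne_one (show j + 1 ≠ 1 by lia)]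
    push_cast
    linear_combination (j + 2) / 2 * hup x m +
      (j + 2) * (j - 1) / 2 * typeOneUp j x m * inv_mul_cancel₀ k.ne_zero
  · rw [typeOneDown]
    push_cast
    ring

theorem exists_p_one_typeOne (h : C.HasBasePolynomials (-1) (-1)) (h2 : C.G 2 ≠ ⊥) {j : ℤ}
    (hj : 1 ≤ j) : (∀ x y, C.p 0 (j + 1) x y = -(j + 1)) ∧ ∃ k : ℂˣ,
      (∀ x y, C.p 1 j x y = k * typeOneUp j x y) ∧
        ∀ x y, C.p (-1) (j + 1) x y = (k : ℂ)⁻¹ * typeOneDown j x y := by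
  induction j, hj using Int.leInduction with
  | base =>
    obtain ⟨k, hk⟩ := h.exists_p_one_one_eq h2
    refine ⟨fun x y ↦ ?_, k, by simpa [typeOneUp] using hk, fun x y ↦ ?_⟩
    · rw [one_add_one_eq_two, h.p_zero_two h2]
      norm_num
    · rw [one_add_one_eq_two, h.p_neg_one_two h2, typeOneDown, Int.cast_one, sub_self, mul_zero,
        zero_div, mul_zero]
  | succ j hj ih =>
    obtain ⟨h0, k, h1, hm1⟩ := ih
    obtain ⟨k', h1', hm1'⟩ := h.exists_p_one_typeOne_succ hj h0 h1 hm1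
    refine ⟨fun x y ↦ ?_, k', h1', hm1'⟩
    rw [h.p_zero_add_two (k := k') h0 fun x y ↦ by
      rw [h1', typeOneUp_of_ne_one (by lia), mul_one]]
    push_cast
    ring

theorem exists_hasSteps_typeOne (h : C.HasBasePolynomials (-1) (-1)) (h2 : C.G 2 ≠ ⊥) :
    ∃ k, C.HasSteps typeOneUp typeOneDown k := by
  choose! k hk using fun j hj ↦ (h.exists_p_one_typeOne h2 (j := j) hj).2
  exact ⟨k, hk⟩

theorem p_zero_left_of_pos (h : C.HasBasePolynomials (-1) (-1)) (h2 : C.G 2 ≠ ⊥) {j : ℤ}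
    (hj : 1 ≤ j) (x y : ℂ) : C.p 0 j x y = -j := by
  obtain rfl | hj := hj.eq_or_lt
  · simp [h.p_zero_one]
  · simpa using (h.exists_p_one_typeOne h2 (j := j - 1) (by lia)).1 x y

end HasBasePolynomials

end ClassV

theorem pM2_skew (i j : ℤ) (x y : ℂ) :
    evalEval x y (pM2 i j) = -evalEval x (-y - x) (pM2 j i) := by
  obtain rfl | hi := eq_or_ne i 0
  · obtain rfl | hj := eq_or_ne j 0 <;> simp [pM2, *]
  · grind (splits := 30) [pM2, evalEval_Pd, evalEval_Pl, evalEval_Pc, evalEval_add, evalEval_mul,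
      evalEval_neg, evalEval_one, evalEval_zero]

theorem pM2_eq_zero {i j : ℤ} (hi : 2 ≤ i.natAbs) (hj : 2 ≤ j.natAbs) : pM2 i j = 0 := by
  grind (splits := 20) [pM2]

theorem pM1_eq_pM2 {i j : ℤ} (hi : -1 ≤ i) (hj : -1 ≤ j) (hij : -1 ≤ i + j) :
    pM1 i j = pM2 i j := by
  grind (splits := 25) [pM1, pM2]

namespace ClassV

variable {L : Type} [AddCommGroup L] [Module ℂ L] {C : ClassV L}

theorem p_eq_zero_of_hasSteps_typeOne {k : ℤ → ℂˣ} (hk : C.HasSteps typeOneUp typeOneDown k)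
    {i j : ℤ} (hi : 2 ≤ i) (hj : 2 ≤ j) (x y : ℂ) : C.p i j x y = 0 := by
  have hdown {n : ℤ} (hn : 2 ≤ n) (x y : ℂ) :
      C.p (-1) n x y = (k (n - 1) : ℂ)⁻¹ * ((n + 1) * (n - 2) / 2) := by
    have hn' := (hk (n - 1) (by lia)).2 x y
    rw [sub_add_cancel] at hn'
    rw [hn', typeOneDown]
    push_cast
    ring
  have hleft : ((i : ℂ) - 2) * C.p (i - 1) j x y = 0 := by
    obtain rfl | hi' := hi.eq_or_lt
    · simp
    · rw [p_eq_zero_of_hasSteps_typeOne hk (by lia) hj, mul_zero]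
  have hright : ((j : ℂ) - 2) * C.p i (j - 1) x y = 0 := by
    obtain rfl | hj' := hj.eq_or_lt
    · simp
    · rw [p_eq_zero_of_hasSteps_typeOne hk hi (by lia), mul_zero]
  have hjac := C.p_jacobi (-1) i j (ij := i - 1) (jk := i + j) (ik := j - 1) (by ring) rfl
    (by ring) x 0 y
  rw [hdown (by lia), hdown hi, hdown hj, add_zero, zero_add] at hjac
  have hne : ((i + j : ℤ) + 1 : ℂ) * ((i + j : ℤ) - 2) ≠ 0 := by
    have hij : (i + j + 1) * (i + j - 2) ≠ 0 := mul_ne_zero (by lia) (by lia)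
    exact_mod_cast hij
  refine (mul_eq_zero.1 (?_ : C.p i j x y * ((k (i + j - 1) : ℂ)⁻¹ *
    (((i + j : ℤ) + 1) * ((i + j : ℤ) - 2) / 2)) = 0)).resolve_right
    (mul_ne_zero (inv_ne_zero (k _).ne_zero) (div_ne_zero hne two_ne_zero))
  linear_combination hjac + (k (i - 1) : ℂ)⁻¹ * (i + 1) / 2 * hleft +
    (k (j - 1) : ℂ)⁻¹ * (j + 1) / 2 * hright
termination_by (i + j).toNat
decreasing_by all_goals lia

theorem p_one_of_two_le (hpos : C.HasSteps typeOneUp typeOneDown fun _ ↦ 1) {j : ℤ} (hj : 2 ≤ j)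
    (x y : ℂ) : C.p 1 j x y = 1 := by
  rw [(hpos j (by lia)).1, typeOneUp_of_ne_one (by lia), Units.val_one, mul_one]

theorem p_one_of_le_neg_two (hneg : C.reverse.HasSteps typeOneUp typeOneDown fun _ ↦ -1) {j : ℤ}
    (hj : j ≤ -2) (x y : ℂ) : C.p 1 j x y = (j - 1) * (j + 2) / 2 := by
  have hj' := (hneg (-j - 1) (by lia)).2 x y
  rw [reverse_p, neg_neg, sub_add_cancel, neg_neg, typeOneDown] at hj'
  push_cast at hj'
  linear_combination -hj'

theorem p_two_of_le_neg_two (hpos : C.HasSteps typeOneUp typeOneDown fun _ ↦ 1)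
    (hneg : C.reverse.HasSteps typeOneUp typeOneDown fun _ ↦ -1) {j : ℤ} (hj : j ≤ -2) (x y : ℂ) :
    C.p 2 j x y = 0 := by
  have hconst (x l m : ℂ) : C.p 1 j (x + l) m * C.p 1 (1 + j) x l =
      C.p 1 j (x + m) l * C.p 1 (1 + j) x m := by
    obtain rfl | hj' := hj.eq_or_lt
    · simp [p_one_of_le_neg_two hneg]
    · simp only [p_one_of_le_neg_two hneg hj, p_one_of_le_neg_two hneg (show 1 + j ≤ -2 by lia)]
  -- `p_{1,1}(-l-m, l) = l - m`, so these `l` and `m` isolate `p_{2,j}(x, y)`.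
  have hjac := C.p_jacobi 1 1 j (ij := 2) rfl rfl rfl x ((y + 1) / 2) ((y - 1) / 2)
  rw [hconst, (hpos 1 le_rfl).1, typeOneUp, if_pos rfl, Units.val_one,
    show (y + 1) / 2 + (y - 1) / 2 = y by ring] at hjac
  linear_combination -hjac

theorem p_eq_zero_of_two_le_of_le_neg_two (hpos : C.HasSteps typeOneUp typeOneDown fun _ ↦ 1)
    (hneg : C.reverse.HasSteps typeOneUp typeOneDown fun _ ↦ -1) {i j : ℤ} (hi : 2 ≤ i)
    (hj : j ≤ -2) (x y : ℂ) : C.p i j x y = 0 := by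
  induction i, hi using Int.leInduction generalizing j x y with
  | base => exact p_two_of_le_neg_two hpos hneg hj x y
  | succ i hi ih =>
    have hright : C.p 1 j x y * C.p i (1 + j) x 0 = 0 := by
      obtain rfl | hj' := hj.eq_or_lt
      · simp [p_one_of_le_neg_two hneg]
      · rw [ih (by lia), mul_zero]
    have hjac := C.p_jacobi 1 i j (ij := i + 1) (by ring) rfl rfl x y 0
    rw [ih hj, p_one_of_two_le hpos hi, add_zero, add_zero, hright] at hjac
    linear_combination -hjac

namespace HasBasePolynomials

variable (h : C.HasBasePolynomials (-1) (-1)) (h2 : C.G 2 ≠ ⊥)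
  (hpos : C.HasSteps typeOneUp typeOneDown fun _ ↦ 1)
include h h2 hpos

theorem p_eq_pM2_of_neg_one_le {i j : ℤ} (hi : -1 ≤ i) (hj : -1 ≤ j) (hij : -1 ≤ i + j)
    (x y : ℂ) : C.p i j x y = evalEval x y (pM2 i j) := by
  wlog hle : i.natAbs ≤ j.natAbs generalizing i j y
  · rw [C.p_skew, pM2_skew, this hj hi (by lia) _ (by lia)]
  obtain rfl | rfl | rfl | hi : i = -1 ∨ i = 0 ∨ i = 1 ∨ 2 ≤ i := by lia
  · obtain rfl | hj : j = 1 ∨ 2 ≤ j := by lia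
    · rw [h.p_neg_one_one]
      norm_num [pM2]
    · have hj' := (hpos (j - 1) (by lia)).2 x y
      rw [sub_add_cancel, typeOneDown] at hj'
      rw [hj', show pM2 (-1) j = Pc ((j + 1) * (j - 2) / 2) by grind [pM2], evalEval_Pc]
      push_cast
      ring
  · obtain rfl | rfl | hj : j = -1 ∨ j = 0 ∨ 1 ≤ j := by lia
    · simp [h.p_zero_neg_one, pM2]
    · simp [C.p_zero_zero, pM2]
    · simp [h.p_zero_left_of_pos h2 hj, pM2]
  · obtain rfl | rfl | hj : j = -1 ∨ j = 1 ∨ 2 ≤ j := by lia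
    · rw [h.p_one_neg_one]
      norm_num [pM2]
    · simp [(hpos 1 le_rfl).1, typeOneUp, pM2]
    · rw [p_one_of_two_le hpos hj, show pM2 1 j = 1 by grind [pM2], evalEval_one]
  · rw [p_eq_zero_of_hasSteps_typeOne hpos hi (by lia), pM2_eq_zero (by lia) (by lia),
      evalEval_zero]

theorem p_eq_pM2 (hm2 : C.G (-2) ≠ ⊥) (hneg : C.reverse.HasSteps typeOneUp typeOneDown fun _ ↦ -1)
    (i j : ℤ) (x y : ℂ) : C.p i j x y = evalEval x y (pM2 i j) := by
  wlog hle : i.natAbs ≤ j.natAbs generalizing i j y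
  · rw [C.p_skew, pM2_skew, this j i _ (by lia)]
  by_cases hij : -1 ≤ i ∧ -1 ≤ j ∧ -1 ≤ i + j
  · exact h.p_eq_pM2_of_neg_one_le h2 hpos hij.1 hij.2.1 hij.2.2 x y
  obtain rfl | rfl | rfl | hi : i = -1 ∨ i = 0 ∨ i = 1 ∨ 2 ≤ i.natAbs := by lia
  · have hj := (hneg (-j) (by lia)).1 x y
    rw [reverse_p, neg_neg, Units.val_neg, Units.val_one, neg_one_mul, neg_inj, typeOneUp] at hj
    rw [hj]
    obtain rfl | hj' : j = -1 ∨ j ≤ -2 := by lia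
    · simp [pM2]
    · rw [if_neg (by lia), show pM2 (-1) j = 1 by grind [pM2], evalEval_one]
  · have hj := h.reverse.p_zero_left_of_pos hm2 (j := -j) (by lia) x y
    rw [reverse_p, neg_zero, neg_neg, neg_inj] at hj
    simp [hj, pM2]
  · rw [p_one_of_le_neg_two hneg (by lia),
      show pM2 1 j = Pc ((j - 1) * (j + 2) / 2) by grind [pM2], evalEval_Pc]
  · rw [pM2_eq_zero hi (by lia), evalEval_zero]
    obtain hi | hi : i ≤ -2 ∨ 2 ≤ i := by lia
    · obtain hj | hj : j ≤ -2 ∨ 2 ≤ j := by lia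
      · have hij := p_eq_zero_of_hasSteps_typeOne hneg (i := -i) (j := -j) (by lia) (by lia) x y
        rwa [reverse_p, neg_neg, neg_neg, neg_eq_zero] at hij
      · rw [C.p_skew, p_eq_zero_of_two_le_of_le_neg_two hpos hneg hj hi, neg_zero]
    · exact p_eq_zero_of_two_le_of_le_neg_two hpos hneg hi (by lia) x y

end HasBasePolynomials

end ClassV

namespace ClassV

variable {L : Type} [AddCommGroup L] [Module ℂ L] {C : ClassV L}

theorem G_eq_bot_of_G_neg_two_eq_bot (h : C.G (-2) = ⊥) {i : ℤ} (hi : i ≤ -2) : C.G i = ⊥ := by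
  have hbot : C.G (- -i) = ⊥ := C.reverse.G_eq_bot_of_G_two_eq_bot h (by lia)
  rwa [neg_neg] at hbot

namespace HasBasePolynomials

theorem G_ne_bot_of_pos (h : C.HasBasePolynomials (-1) (-1)) (h2 : C.G 2 ≠ ⊥) {i : ℤ}
    (hi : 1 ≤ i) : C.G i ≠ ⊥ := by
  obtain ⟨k, hk⟩ := h.exists_hasSteps_typeOne h2
  exact hk.G_ne_bot (fun j _ ↦ exists_typeOneUp_ne_zero j) hi

theorem isM2 (h : C.HasBasePolynomials (-1) (-1)) (h2 : C.G 2 ≠ ⊥) (hm2 : C.G (-2) ≠ ⊥) :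
    C.IsM2 := by
  obtain ⟨k, hk⟩ := h.exists_hasSteps_typeOne h2
  obtain ⟨k', hk'⟩ := h.reverse.exists_hasSteps_typeOne hm2
  obtain ⟨c, h0, h1, hm1, hc⟩ := exists_units_steps (fun j ↦ k j / 1) fun j ↦ k' j / -1
  have hpos := hk.rescale h1 hm1 fun j hj ↦ (hc j hj).1
  have hneg := hk'.reverse_rescale h1 hm1 fun j hj ↦ (hc j hj).2
  have h' : (C.rescale c).HasBasePolynomials (-1) (-1) := by
    simpa [h0, h1, hm1] using h.rescale c
  refine RankOneContext.exists_basis_of_p_eq (R := (C.rescale c).toRankOneContext) (fun i ↦ ?_)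
    (h'.p_eq_pM2 h2 hpos hm2 hneg)
  obtain hi | rfl | hi : 1 ≤ i ∨ i = 0 ∨ 1 ≤ -i := by lia
  · exact h.G_ne_bot_of_pos h2 hi
  · exact C.supp_zero
  · have hi' : C.G (- -i) ≠ ⊥ := h.reverse.G_ne_bot_of_pos hm2 hi
    rwa [neg_neg] at hi'

theorem isM1 (h : C.HasBasePolynomials (-1) (-1)) (h2 : C.G 2 ≠ ⊥) (hm2 : C.G (-2) = ⊥) :
    C.IsM1 := by
  obtain ⟨k, hk⟩ := h.exists_hasSteps_typeOne h2
  obtain ⟨c, h0, h1, hm1, hc⟩ := exists_units_steps (fun j ↦ k j / 1) 1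
  have hpos := hk.rescale h1 hm1 fun j hj ↦ (hc j hj).1
  have h' : (C.rescale c).HasBasePolynomials (-1) (-1) := by
    simpa [h0, h1, hm1] using h.rescale c
  set R := (C.rescale c).toRankOneContext
  have hbot {i : ℤ} (hi : i ≤ -2) : C.G i = ⊥ := G_eq_bot_of_G_neg_two_eq_bot hm2 hi
  have hne {i : ℤ} (hi : -1 ≤ i) : C.G i ≠ ⊥ := by
    obtain rfl | rfl | hi : i = -1 ∨ i = 0 ∨ 1 ≤ i := by lia
    exacts [C.supp_negone, C.supp_zero, h.G_ne_bot_of_pos h2 hi]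
  refine ⟨R.bas, R.isFreePolyBasis_bas Subtype.val_injective (fun i ↦ hne i.2) fun i hi ↦
    ⟨⟨i, ?_⟩, rfl⟩, fun i j hi hj ↦ ?_⟩
  · by_contra hlt
    exact hi (hbot (by lia))
  have hij : (if -1 ≤ i + j then R.bas (i + j) else 0) = R.bas (i + j) := by
    split_ifs with hij
    · rfl
    · exact (R.bas_zero _ (hbot (by lia))).symm
  have hsp : R.sp i j = pM1 i j := by
    by_cases hij : -1 ≤ i + j
    · refine eq_of_evalEval_eq fun x y ↦ ?_
      rw [pM1_eq_pM2 hi hj hij]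
      exact h'.p_eq_pM2_of_neg_one_le h2 hpos hi hj hij x y
    · rw [R.sp_zero i j (.inr (.inr (hbot (by lia))))]
      grind [pM1]
  rw [hij, ← hsp]
  exact R.bracketEq_bas i j

end HasBasePolynomials

end ClassV

/-! ### Current algebras -/

theorem LieConformalAlgebra.isCur_of_basis {L : Type} [AddCommGroup L] [Module ℂ L]
    {C : LieConformalAlgebra L} {ι g : Type} [LieRing g] [LieAlgebra ℂ g]
    (b : Module.Basis ι ℂ g) {v : ι → L} (hv : C.IsFreePolyBasis v)
    (hprd : ∀ n i j, C.prd n (v i) (v j) = if n = 0 then b.constr ℂ v ⁅b i, b j⁆ else 0) :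
    C.IsCur g := by
  set φ := b.constr ℂ v with hφ
  have hbrkt (n : ℕ) : (C.prd n).compl₁₂ φ φ = if n = 0 then
      (LieModule.toEnd ℂ g g : g →ₗ[ℂ] g →ₗ[ℂ] g).compr₂ φ else 0 := by
    refine b.ext fun i ↦ b.ext fun j ↦ ?_
    split_ifs with hn <;> simp [hφ, hprd, hn]
  refine ⟨φ, ?_, fun x y ↦ by simpa using LinearMap.congr_fun₂ (hbrkt 0) x y,
    fun n hn x y ↦ by simpa [Nat.ne_of_gt hn] using LinearMap.congr_fun₂ (hbrkt n) x y⟩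
  let e : (ℕ →₀ g) ≃ₗ[ℂ] L := (Finsupp.basis fun _ : ℕ ↦ b).equiv (Module.Basis.mk hv.1 hv.2.ge)
    ((Equiv.sigmaEquivProd ℕ ι).trans (Equiv.prodComm _ _))
  have he : Finsupp.lsum ℂ (fun k ↦ (C.D ^ k) ∘ₗ φ) = e.toLinearMap := by
    refine (Finsupp.basis fun _ : ℕ ↦ b).ext fun ⟨k, i⟩ ↦ ?_
    rw [LinearEquiv.coe_coe, Module.Basis.equiv_apply]
    simp [hφ, Module.End.pow_apply]
  convert! e.bijective using 1
  funext x
  rw [← LinearEquiv.coe_coe, ← he]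
  simp [Finsupp.sum, Module.End.pow_apply]

section SpecialLinear

open LieAlgebra.SpecialLinear

variable {R : Type*} [CommRing R]

theorem slTwo_apply_one_one (A : sl (Fin 2) R) : A.1 1 1 = -A.1 0 0 :=
  eq_neg_of_add_eq_zero_right ((Matrix.trace_fin_two A.1).symm.trans A.2)

variable (R) in
/-- The coordinates `(a, b, c)` of the traceless matrix with rows `(a, b)` and `(c, -a)`. -/
def slTwoEquivFun : sl (Fin 2) R ≃ₗ[R] (Fin 3 → R) where
  toFun A := ![A.1 0 0, A.1 0 1, A.1 1 0]
  map_add' A B := by ext i; fin_cases i <;> rfl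
  map_smul' c A := by ext i; fin_cases i <;> rfl
  invFun u := ⟨!![u 0, u 1; u 2, -u 0], by simp [sl, Matrix.trace_fin_two]⟩
  left_inv A := by
    refine Subtype.ext (Matrix.ext fun i j ↦ ?_)
    fin_cases i <;> fin_cases j
    exacts [rfl, rfl, rfl, (slTwo_apply_one_one A).symm]
  right_inv u := by ext i; fin_cases i <;> rfl

theorem slTwoEquivFun_lie (A B : sl (Fin 2) R) :
    slTwoEquivFun R ⁅A, B⁆ =
      let a := slTwoEquivFun R A
      let b := slTwoEquivFun R B
      ![a 1 * b 2 - a 2 * b 1, 2 * (a 0 * b 1 - a 1 * b 0), 2 * (a 2 * b 0 - a 0 * b 2)] := by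
  have hlie (i j : Fin 2) : ⁅A, B⁆.1 i j =
      A.1 i 0 * B.1 0 j + A.1 i 1 * B.1 1 j - (B.1 i 0 * A.1 0 j + B.1 i 1 * A.1 1 j) := by
    rw [sl_bracket, Matrix.sub_apply, Matrix.mul_apply, Matrix.mul_apply, Fin.sum_univ_two,
      Fin.sum_univ_two]
  ext i
  fin_cases i
  · refine (hlie 0 0).trans (show _ = A.1 0 1 * B.1 1 0 - A.1 1 0 * B.1 0 1 from ?_)
    ring
  · refine (hlie 0 1).trans (show _ = 2 * (A.1 0 0 * B.1 0 1 - A.1 0 1 * B.1 0 0) from ?_)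
    rw [slTwo_apply_one_one, slTwo_apply_one_one]
    ring
  · refine (hlie 1 0).trans (show _ = 2 * (A.1 1 0 * B.1 0 0 - A.1 0 0 * B.1 1 0) from ?_)
    rw [slTwo_apply_one_one, slTwo_apply_one_one]
    ring

end SpecialLinear

theorem RankOneContext.prd_bas_of_p_eq {L : Type} [AddCommGroup L] [Module ℂ L]
    {R : RankOneContext L} {i j : ℤ} {a : ℂ} (h : ∀ x y, R.p i j x y = a) (n : ℕ) :
    R.prd n (R.bas i) (R.bas j) = if n = 0 then a • R.bas (i + j) else 0 := by
  have hsp : R.sp i j = Pc a := eq_of_evalEval_eq fun x y ↦ (h x y).trans (evalEval_Pc ..).symm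
  rw [R.bracketEq_bas i j n, hsp, Pc, coeff_C, R.applyP_eq_aeval]
  split_ifs with hn <;> simp [hn]

namespace ClassV

variable {L : Type} [AddCommGroup L] [Module ℂ L] {C : ClassV L}

namespace HasBasePolynomials

theorem isCurSl2 (h : C.HasBasePolynomials (Polynomial.C 2) (-1)) (h2 : C.G 2 = ⊥)
    (hm2 : C.G (-2) = ⊥) : C.IsCurSl2 := by
  have hne (q : Fin 3) : C.G (![0, 1, -1] q) ≠ ⊥ := by
    fin_cases q
    exacts [C.supp_zero, C.supp_one, C.supp_negone]
  have hcover (i : ℤ) (hi : C.G i ≠ ⊥) : ∃ q : Fin 3, ![0, 1, -1] q = i := by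
    obtain hi' | rfl | rfl | rfl | hi' : i ≤ -2 ∨ i = 0 ∨ i = 1 ∨ i = -1 ∨ 2 ≤ i := by lia
    exacts [absurd (G_eq_bot_of_G_neg_two_eq_bot hm2 hi') hi, ⟨0, rfl⟩, ⟨1, rfl⟩, ⟨2, rfl⟩,
      absurd (C.G_eq_bot_of_G_two_eq_bot h2 hi') hi]
  refine LieConformalAlgebra.isCur_of_basis (Module.Basis.ofEquivFun (slTwoEquivFun ℂ))
    (C.isFreePolyBasis_bas (by decide) hne hcover) fun n i j ↦ ?_
  have h11 (x y : ℂ) : C.p 1 1 x y = 0 := RankOneContext.p_eq_zero_of_bot (.inr (.inr h2)) x y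
  have hm11 (x y : ℂ) : C.p (-1) (-1) x y = 0 :=
    RankOneContext.p_eq_zero_of_bot (.inr (.inr hm2)) x y
  have hm10 (x y : ℂ) : C.p (-1) 0 x y = 2 := by rw [C.p_skew, h.p_zero_neg_one]; simp
  rw [Module.Basis.constr_apply_fintype]
  simp only [Module.Basis.equivFun_ofEquivFun, Module.Basis.coe_ofEquivFun, slTwoEquivFun_lie,
    LinearEquiv.apply_symm_apply]
  fin_cases i <;> fin_cases j <;>
    simp [RankOneContext.prd_bas_of_p_eq, Fin.sum_univ_three, C.p_zero_zero, h.p_zero_one,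
      h.p_one_zero, h.p_zero_neg_one, hm10, h.p_neg_one_one, h.p_one_neg_one, h11, hm11]

theorem isCurSl2_or_isM1_or_isM2 {f g : ℂ[X]} (h : C.HasBasePolynomials f g)
    (hd : g.natDegree + f.natDegree = 0) : C.IsCurSl2 ∨ C.IsM1 ∨ C.IsM2 := by
  obtain ⟨hg, hf⟩ := Nat.add_eq_zero_iff.1 hd
  obtain ⟨a, rfl⟩ := natDegree_eq_zero.1 hf
  obtain ⟨b, rfl⟩ := natDegree_eq_zero.1 hg
  lift a to ℂˣ using (C_ne_zero.1 h.left_ne_zero).isUnit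
  lift b to ℂˣ using (C_ne_zero.1 h.right_ne_zero).isUnit
  obtain ⟨c, hc⟩ := h.exists_rescale (-1 / a) (-1 / b)
  obtain ⟨c', hc'⟩ := h.exists_rescale (Units.mk0 2 two_ne_zero / a) (-1 / b)
  replace hc : (C.rescale c).HasBasePolynomials (-1) (-1) := by simpa [← C_mul] using hc
  replace hc' : (C.rescale c').HasBasePolynomials (Polynomial.C 2) (-1) := by
    simpa [← C_mul] using hc'
  by_cases h2 : C.G 2 = ⊥ <;> by_cases hm2 : C.G (-2) = ⊥
  · exact .inl (hc'.isCurSl2 h2 hm2)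
  · exact .inr (.inl (hc.reverse.isM1 hm2 h2))
  · exact .inr (.inl (hc.isM1 h2 hm2))
  · exact .inr (.inr (hc.isM2 h2 hm2))

end HasBasePolynomials

theorem hasBasePolynomials_of_sp_eq {f g : ℂ[X]} (hf : f.map Polynomial.C = C.sp 0 1)
    (hg : Polynomial.C g = C.sp (-1) 1) : C.HasBasePolynomials f g where
  p_zero_one x y := by
    rw [RankOneContext.p, ← hf, evalEval, eval_map, eval₂_at_apply, eval_C]
  p_neg_one_one x y := by rw [RankOneContext.p, ← hg, evalEval_C]

end ClassV

/-- for a class `𝒱` algebra,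
`deg p_{-1,1}(∂) + deg p_{0,1}(λ) ≠ 1`; if the sum is `0` then `L` is of
type I (`Cur sl(2,ℂ)`, `M(1)`, `M(2)`); if the sum is `2` then `L` is of
type II (`ECL(s)`, `SCL₂(0,s)`, `CL₂(0,s)`, `CL₃(s)`). -/
theorem classV_degree_sum_classification
    {L : Type} [AddCommGroup L] [Module ℂ L] (C : ClassV L)
    (hmem₁ : (C.sp (-1) 1).natDegree = 0)
    (hmem₀ : ∀ n : ℕ, ((C.sp 0 1).coeff n).natDegree = 0) :
    ((C.sp (-1) 1).coeff 0).natDegree + (C.sp 0 1).natDegree ≠ 1 ∧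
    (((C.sp (-1) 1).coeff 0).natDegree + (C.sp 0 1).natDegree = 0 →
      C.toLieConformalAlgebra.IsCurSl2 ∨ C.toLieConformalAlgebra.IsM1 ∨
        C.toLieConformalAlgebra.IsM2) ∧
    (((C.sp (-1) 1).coeff 0).natDegree + (C.sp 0 1).natDegree = 2 →
      ∃ s : ℂ, C.toLieConformalAlgebra.IsECL s ∨ C.toLieConformalAlgebra.IsSCL2 0 s ∨
        C.toLieConformalAlgebra.IsCL2 0 s ∨ C.toLieConformalAlgebra.IsCL3 s) := by
  obtain ⟨f, hf⟩ := (mem_lifts _).1 ((lifts_iff_coeff_lifts _).2 fun n ↦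
    natDegree_eq_zero.1 (hmem₀ n))
  obtain ⟨g, hg⟩ := natDegree_eq_zero.1 hmem₁
  have h := C.hasBasePolynomials_of_sp_eq hf hg
  rw [← hf, ← hg, natDegree_map_eq_of_injective C_injective, coeff_C_zero]
  exact ⟨h.natDegree_add_natDegree_ne_one, h.isCurSl2_or_isM1_or_isM2,
    h.exists_isECL_or_isSCL2_or_isCL2_or_isCL3⟩
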